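/- Let f ∈ O_3 be an isolated singularity. Then (Γ^2(f) = ∅ or Γ^2(f) = E_f ≠ ∅) if and only if Γ^1(f) ∩ J ≠ ∅, where J is the family of segments I_1^k = [(0,1,1),(k,0,0)], I_2^k = [(1,0,1),(0,k,0)], I_3^k = [(1,1,0),(0,0,k)] for integers k ≥ 2. -/

import Mathlib

/-!
A positive weight `u` defines the compact face of the Newton diagram spanned by the finitely many
exponents of `f` at which `⟨u, ν⟩` is minimal (`faceOf_eq`), so the whole statement is about these
minimal sets (`MinSet`), and only three facts about the support of an isolated singularity are used:
all exponents have order at least two, the support comes within distance one of each coordinate axis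
(`exists_near_axis`), and it meets each coordinate plane (`exists_mem_plane`). If the second fact
failed, the gradient would vanish along an axis; if the third failed, `f` would be divisible by some
`z_j`, and the gradient would vanish on the common zeros of `z_j` and the quotient, a germ of a
curve. Holomorphic functions of two variables having no isolated zeros is obtained in
`no_isolated_zero` from the maximum principle in one variable.

If every 2-dimensional face is exceptional, one moves a weight continuously while a given edge stays
minimal (`walk`). The motion ends on the boundary of the orthant, where the facts about axes and
planes apply, or at a weight with a new minimal exponent, where exceptionality of the resulting
2-dimensional face applies. Starting from an edge joining `(0,1,w)` to `(a,0,b)` with `a ≥ 2`, this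
either gives `w = 1` and `b = 0`, or replaces the edge by one with smaller `b` (`concl_of_edge`). Such
a starting edge exists after a permutation of the coordinates: if the support misses an axis, its
points next to that axis provide one (`concl_of_nonconvenient`), and otherwise an exceptional face
at the vertex on the third axis does (`concl_of_convenient`). The argument includes the
case without 2-dimensional faces.

Conversely, let the segment from `W = e_j + e_k` to `m e_i` be the face of a weight `u₀`, and let `u`
define a 2-dimensional face. Any exponent `ν` of this face other than `W` has `ν_j = 0` or `ν_k = 0`,
and exponents of the two kinds cannot occur together off the axis `OX_i`: comparing two
such exponents with the ends of the segment, minimality for `u` and minimality for `u₀` give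
opposite inequalities between the coordinates (`mem_Ef_of_edge`). So all minimal exponents except `W`
lie in one coordinate plane, which makes the face exceptional (`exc_of_plane`).
-/

open Finset Filter Topology

/-- The `i`-th partial derivative of `f`. -/
noncomputable def pder {n : ℕ} (i : Fin n) (f : (Fin n → ℂ) → ℂ) : (Fin n → ℂ) → ℂ :=
  fun z => fderiv ℂ f z (Pi.single i 1)

/-- The iterated partial derivative `∂^ν f` for a multi-index `ν`. -/
noncomputable def mder {n : ℕ} (ν : Fin n → ℕ) (f : (Fin n → ℂ) → ℂ) : (Fin n → ℂ) → ℂ :=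
  ((List.finRange n).map fun i => (pder i)^[ν i]).foldr (fun g acc => g acc) f

/-- The support of the Taylor expansion of `f` at `0`. -/
def NSupp {n : ℕ} (f : (Fin n → ℂ) → ℂ) : Set (Fin n → ℕ) :=
  {ν | mder ν f 0 ≠ 0}

/-- The Taylor coefficient `a_ν` of `f` at `0`. -/
noncomputable def coeffOf {n : ℕ} (f : (Fin n → ℂ) → ℂ) (ν : Fin n → ℕ) : ℂ :=
  mder ν f 0 / ((∏ i, (ν i).factorial : ℕ) : ℂ)

/-- The Newton diagram `Γ₊(f)`: the convex hull of `⋃_{ν ∈ supp f} (ν + ℝ₊ⁿ)`. -/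
def NDiag {n : ℕ} (f : (Fin n → ℂ) → ℂ) : Set (Fin n → ℝ) :=
  convexHull ℝ {x | ∃ ν ∈ NSupp f, ∀ i, (ν i : ℝ) ≤ x i}

/-- `l(u, A) = inf {⟨u, v⟩ : v ∈ A}`. -/
noncomputable def ell {n : ℕ} (u : Fin n → ℝ) (A : Set (Fin n → ℝ)) : ℝ :=
  sInf ((fun v => ∑ i, u i * v i) '' A)

/-- The face `Δ(u, A) = {v ∈ A : ⟨u, v⟩ = l(u, A)}`. -/
def faceOf {n : ℕ} (u : Fin n → ℝ) (A : Set (Fin n → ℝ)) : Set (Fin n → ℝ) :=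
  {v | v ∈ A ∧ ∑ i, u i * v i = ell u A}

/-- `S` is a compact face of the Newton diagram of `f` (member of the Newton boundary). -/
def IsCompactFace {n : ℕ} (f : (Fin n → ℂ) → ℂ) (S : Set (Fin n → ℝ)) : Prop :=
  ∃ u : Fin n → ℝ, (∀ i, 0 < u i) ∧ S = faceOf u (NDiag f)

/-- The dimension of a face, as the rank of the direction of its affine span. -/
noncomputable def faceDim {n : ℕ} (S : Set (Fin n → ℝ)) : ℕ :=
  Module.finrank ℝ (affineSpan ℝ S).direction

/-- `Γ^k(f)`: the `k`-dimensional compact faces of the Newton boundary of `f`. -/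
def GammaK {n : ℕ} (f : (Fin n → ℂ) → ℂ) (k : ℕ) : Set (Set (Fin n → ℝ)) :=
  {S | IsCompactFace f S ∧ faceDim S = k}

/-- The quasihomogeneous polynomial `f_S = Σ_{ν ∈ S} a_ν z^ν`. -/
noncomputable def facePoly {n : ℕ} (f : (Fin n → ℂ) → ℂ) (S : Set (Fin n → ℝ)) :
    (Fin n → ℂ) → ℂ :=
  fun z => ∑' ν : {ν : Fin n → ℕ // (fun i => (ν i : ℝ)) ∈ S}, coeffOf f ν.1 * ∏ i, z i ^ ν.1 i

/-- `f` is nondegenerate in the Kouchnirenko sense. -/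
def Nondeg {n : ℕ} (f : (Fin n → ℂ) → ℂ) : Prop :=
  ∀ S, IsCompactFace f S →
    ¬∃ z : Fin n → ℂ, (∀ i, z i ≠ 0) ∧ ∀ i, pder i (facePoly f S) z = 0

/-- `f` is a singularity: a nonzero holomorphic germ with `f 0 = 0`, `∇f 0 = 0`. -/
def IsSing {n : ℕ} (f : (Fin n → ℂ) → ℂ) : Prop :=
  AnalyticAt ℂ f 0 ∧ (¬∀ᶠ z in 𝓝 0, f z = 0) ∧ f 0 = 0 ∧ ∀ i, pder i f 0 = 0

/-- `f` is an isolated singularity: `∇f` has an isolated zero at `0`. -/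
def IsIsolSing {n : ℕ} (f : (Fin n → ℂ) → ℂ) : Prop :=
  IsSing f ∧ ∃ r > (0 : ℝ), ∀ z : Fin n → ℂ, ‖z‖ < r → z ≠ 0 → ∃ i, pder i f z ≠ 0

/-- Euclidean distance of a point of `ℝ³` to the `i`-th coordinate axis. -/
noncomputable def distAxis (i : Fin 3) (W : Fin 3 → ℝ) : ℝ :=
  Real.sqrt (∑ j ∈ Finset.univ.erase i, (W j) ^ 2)

/-- The vertices (0-dimensional compact faces of the Newton boundary of `f`) lying in `S`. -/
def vtxOf (f : (Fin 3 → ℂ) → ℂ) (S : Set (Fin 3 → ℝ)) : Set (Fin 3 → ℝ) :=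
  {A | IsCompactFace f {A} ∧ A ∈ S}

/-- `S` is an exceptional face with respect to the axis `OX_i`: one of its vertices `W` is
at distance `1` from `OX_i` and the remaining vertices constitute a `1`-dimensional face
lying in a coordinate plane containing `OX_i`. -/
def ExcWrt (f : (Fin 3 → ℂ) → ℂ) (i : Fin 3) (S : Set (Fin 3 → ℝ)) : Prop :=
  ∃ W ∈ vtxOf f S, distAxis i W = 1 ∧
    ∃ T ∈ GammaK f 1, (∃ j, j ≠ i ∧ T ⊆ {x : Fin 3 → ℝ | x j = 0}) ∧
      vtxOf f T = vtxOf f S \ {W}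

/-- The set `E_f` of exceptional 2-dimensional faces of `f`. -/
def Ef (f : (Fin 3 → ℂ) → ℂ) : Set (Set (Fin 3 → ℝ)) :=
  {S | S ∈ GammaK f 2 ∧ ∃ i, ExcWrt f i S}

/-- `I` is the segment `I_j^m` of the family `𝒥` for the given `m`. -/
def segJ (m : ℕ) (I : Set (Fin 3 → ℝ)) : Prop :=
  I = segment ℝ ![0, 1, 1] ![(m : ℝ), 0, 0] ∨
  I = segment ℝ ![1, 0, 1] ![0, (m : ℝ), 0] ∨
  I = segment ℝ ![1, 1, 0] ![0, 0, (m : ℝ)]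

/-- `I` belongs to the family `𝒥 = {I_j^k : j = 1,2,3, k ≥ 2}`. -/
def InJ (I : Set (Fin 3 → ℝ)) : Prop := ∃ m : ℕ, 2 ≤ m ∧ segJ m I

/-! ### Minimal exponents of a weight -/

/-- The value `⟨u, ν⟩` of a weight `u` on an exponent `ν`. -/
noncomputable def wt (u : Fin 3 → ℝ) (ν : Fin 3 → ℕ) : ℝ := ∑ i, u i * (ν i : ℝ)

/-- The exponents of `V` at which the weight `u` attains its minimum over `V`. -/
def MinSet (V : Set (Fin 3 → ℕ)) (u : Fin 3 → ℝ) : Set (Fin 3 → ℕ) :=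
  {ν | ν ∈ V ∧ ∀ μ ∈ V, wt u ν ≤ wt u μ}

lemma wt_three (u : Fin 3 → ℝ) (ν : Fin 3 → ℕ) :
    wt u ν = u 0 * (ν 0 : ℝ) + u 1 * (ν 1 : ℝ) + u 2 * (ν 2 : ℝ) := by
  simp [wt, Fin.sum_univ_three]

lemma wt_add_smul (u d : Fin 3 → ℝ) (ε : ℝ) (ν : Fin 3 → ℕ) :
    wt (u + ε • d) ν = wt u ν + ε * wt d ν := by
  simp only [wt_three, Pi.add_apply, Pi.smul_apply, smul_eq_mul]; ring

lemma wt_mono {u v : Fin 3 → ℝ} (h : ∀ i, u i ≤ v i) (ν : Fin 3 → ℕ) : wt u ν ≤ wt v ν :=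
  Finset.sum_le_sum fun i _ => mul_le_mul_of_nonneg_right (h i) (Nat.cast_nonneg _)

lemma finite_wt_le {u : Fin 3 → ℝ} (hu : ∀ i, 0 < u i) (C : ℝ) :
    {ν : Fin 3 → ℕ | wt u ν ≤ C}.Finite := by
  refine (Set.finite_Iic (fun i => ⌊C / u i⌋₊)).subset fun ν hν i => ?_
  refine Nat.le_floor ?_
  rw [le_div_iff₀ (hu i), mul_comm]
  refine le_trans ?_ hν
  exact Finset.single_le_sum (f := fun i => u i * (ν i : ℝ))
    (fun j _ => mul_nonneg (hu j).le (Nat.cast_nonneg _)) (Finset.mem_univ i)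

lemma minSet_nonempty {V : Set (Fin 3 → ℕ)} (hV : V.Nonempty) {u : Fin 3 → ℝ}
    (hu : ∀ i, 0 < u i) : (MinSet V u).Nonempty := by
  obtain ⟨μ, hμ⟩ := hV
  have hfin : (V ∩ {ν | wt u ν ≤ wt u μ}).Finite := (finite_wt_le hu _).subset Set.inter_subset_right
  obtain ⟨a, ha, hmin⟩ := Set.exists_min_image _ (wt u) hfin ⟨μ, hμ, le_refl (wt u μ)⟩
  refine ⟨a, ha.1, fun ν hν => ?_⟩
  by_cases h : wt u ν ≤ wt u μ
  · exact hmin ν ⟨hν, h⟩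
  · exact ha.2.trans (not_le.1 h).le

lemma minSet_finite {V : Set (Fin 3 → ℕ)} {u : Fin 3 → ℝ}
    (hu : ∀ i, 0 < u i) : (MinSet V u).Finite := by
  rcases (MinSet V u).eq_empty_or_nonempty with h | ⟨a, ha⟩
  · rw [h]; exact Set.finite_empty
  · exact (finite_wt_le hu (wt u a)).subset fun ν hν => hν.2 a ha.1

/-- A small move of a positive weight `u` in a direction `d` keeps minimal every exponent that
minimises `d` on the current minimal set, and the new minimal exponents are among these.
Exponents of large weight do not interfere, because only finitely many have bounded weight. -/
lemma persist {V : Set (Fin 3 → ℕ)} {u : Fin 3 → ℝ} (hu : ∀ i, 0 < u i) {A : Fin 3 → ℕ}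
    (hA : A ∈ MinSet V u) (d : Fin 3 → ℝ) (hd : ∀ R ∈ MinSet V u, wt d A ≤ wt d R) :
    ∀ᶠ ε in 𝓝[>] (0 : ℝ), (∀ i, 0 < (u + ε • d) i) ∧ A ∈ MinSet V (u + ε • d) ∧
      ∀ ν ∈ MinSet V (u + ε • d), ν ∈ MinSet V u ∧ wt d ν = wt d A := by
  have h0 : ∀ᶠ ε in 𝓝[>] (0 : ℝ), 0 < ε := eventually_mem_nhdsWithin
  have h1 : ∀ᶠ ε in 𝓝[>] (0 : ℝ), ∀ i, ((1 / 2 : ℝ) • u) i < (u + ε • d) i := by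
    rw [eventually_all]
    intro i
    have : Tendsto (fun ε : ℝ => (u + ε • d) i) (𝓝 0) (𝓝 (u i + 0 * d i)) := by
      simp only [Pi.add_apply, Pi.smul_apply, smul_eq_mul]
      exact tendsto_const_nhds.add (tendsto_id.mul_const _)
    refine nhdsWithin_le_nhds (this.eventually (lt_mem_nhds ?_))
    simp only [Pi.smul_apply, smul_eq_mul]
    linarith [hu i]
  have hT : ∀ ν, Tendsto (fun ε : ℝ => wt (u + ε • d) ν) (𝓝[>] 0) (𝓝 (wt u ν)) := by
    intro ν
    have : Tendsto (fun ε : ℝ => wt u ν + ε * wt d ν) (𝓝 0) (𝓝 (wt u ν + 0 * wt d ν)) :=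
      tendsto_const_nhds.add (tendsto_id.mul_const _)
    simp only [zero_mul, add_zero] at this
    simp only [wt_add_smul]
    exact this.mono_left nhdsWithin_le_nhds
  have h2 : ∀ᶠ ε in 𝓝[>] (0 : ℝ), wt (u + ε • d) A < wt u A + 1 :=
    (hT A).eventually (gt_mem_nhds (by linarith))
  have hF : {ν : Fin 3 → ℕ | wt ((1 / 2 : ℝ) • u) ν ≤ wt u A + 1}.Finite :=
    finite_wt_le (fun i => by simp only [Pi.smul_apply, smul_eq_mul]; linarith [hu i]) _
  have h3 : ∀ᶠ ε in 𝓝[>] (0 : ℝ), ∀ ν ∈ {ν : Fin 3 → ℕ | wt ((1 / 2 : ℝ) • u) ν ≤ wt u A + 1},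
      ν ∈ V → ν ∉ MinSet V u → wt (u + ε • d) A < wt (u + ε • d) ν := by
    rw [eventually_all_finite hF]
    intro ν _
    by_cases hν : ν ∈ V ∧ ν ∉ MinSet V u
    · have hlt : wt u A < wt u ν := by
        by_contra hcon
        exact hν.2 ⟨hν.1, fun μ hμ => (not_lt.1 hcon).trans (hA.2 μ hμ)⟩
      filter_upwards [(hT A).eventually_lt (hT ν) hlt] with ε h _ _ using h
    · exact Eventually.of_forall fun ε h h' => (hν ⟨h, h'⟩).elim
  filter_upwards [h0, h1, h2, h3] with ε e0 e1 e2 e3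
  have key : ∀ ν ∈ V, ν ∉ MinSet V u → wt (u + ε • d) A < wt (u + ε • d) ν := by
    intro ν hν hν'
    by_cases hc : wt ((1 / 2 : ℝ) • u) ν ≤ wt u A + 1
    · exact e3 ν hc hν hν'
    · exact e2.trans ((not_le.1 hc).trans_le (wt_mono (fun i => (e1 i).le) ν))
  refine ⟨fun i => lt_trans ?_ (e1 i), ⟨hA.1, fun μ hμ => ?_⟩, fun ν hν => ?_⟩
  · simp only [Pi.smul_apply, smul_eq_mul]; linarith [hu i]
  · by_cases hm : μ ∈ MinSet V u
    · rw [wt_add_smul, wt_add_smul]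
      have := hA.2 μ hμ
      have := mul_le_mul_of_nonneg_left (hd μ hm) e0.le
      linarith
    · exact (key μ hμ hm).le
  · by_cases hm : ν ∈ MinSet V u
    · refine ⟨hm, le_antisymm ?_ (hd ν hm)⟩
      have h := hν.2 A hA.1
      rw [wt_add_smul, wt_add_smul] at h
      have := hA.2 ν hν.1
      exact le_of_mul_le_mul_left (by linarith) e0
    · exact absurd (hν.2 A hA.1) (not_le.2 (key ν hν.1 hm))

/-- The face of a face cut out by a second linear form is again cut out by a positive weight. -/
lemma perturb {V : Set (Fin 3 → ℕ)} (hV : V.Nonempty) {u : Fin 3 → ℝ} (hu : ∀ i, 0 < u i)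
    (d : Fin 3 → ℝ) : ∃ u' : Fin 3 → ℝ, (∀ i, 0 < u' i) ∧ ∃ A ∈ MinSet V u,
      (∀ R ∈ MinSet V u, wt d A ≤ wt d R) ∧
      MinSet V u' = {ν | ν ∈ MinSet V u ∧ wt d ν = wt d A} := by
  obtain ⟨A, hA, hmin⟩ :=
    Set.exists_min_image (MinSet V u) (wt d) (minSet_finite hu) (minSet_nonempty hV hu)
  obtain ⟨ε, h1, h2, h3⟩ := (persist hu hA d hmin).exists
  refine ⟨u + ε • d, h1, A, hA, hmin, Set.Subset.antisymm h3 fun ν hν => ⟨hν.1.1, fun μ hμ => ?_⟩⟩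
  refine le_trans (le_of_eq ?_) (h2.2 μ hμ)
  rw [wt_add_smul, wt_add_smul, hν.2, le_antisymm (hν.1.2 A hA.1) (hA.2 ν hν.1.1)]

/-- Every face has a vertex: minimise the three coordinates one after the other. -/
lemma exists_vertex {V : Set (Fin 3 → ℕ)} (hV : V.Nonempty) {u : Fin 3 → ℝ} (hu : ∀ i, 0 < u i) :
    ∃ u' : Fin 3 → ℝ, (∀ i, 0 < u' i) ∧ ∃ A ∈ MinSet V u, MinSet V u' = {A} := by
  obtain ⟨u1, hu1, A1, hA1, -, e1⟩ := perturb hV hu ![1, 0, 0]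
  obtain ⟨u2, hu2, A2, hA2, -, e2⟩ := perturb hV hu1 ![0, 1, 0]
  obtain ⟨u3, hu3, A3, hA3, -, e3⟩ := perturb hV hu2 ![0, 0, 1]
  have hA2' := hA2
  have hA3' := hA3
  rw [e2] at hA3'
  have hA31 := hA3'.1
  rw [e1] at hA31
  refine ⟨u3, hu3, A3, hA31.1, ?_⟩
  ext ν
  simp only [Set.mem_singleton_iff]
  constructor
  · intro hν
    rw [e3] at hν
    obtain ⟨hν2, h3⟩ := hν
    rw [e2] at hν2
    obtain ⟨hν1, h2⟩ := hν2
    rw [e1] at hν1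
    have h1 := hν1.2
    have g2 := hA3'.2
    have g1 := hA31.2
    simp [wt_three] at h1 h2 h3 g1 g2
    ext i
    fin_cases i <;> simp <;> omega
  · rintro rfl
    rw [e3]
    exact ⟨hA3, rfl⟩

/-- Moving a positive weight along a direction `d` with a negative component while `A` stays
minimal, one ends either on the boundary of the orthant or at a weight whose minimal set has
acquired an exponent `R` that blocks any further movement. -/
lemma walk {V : Set (Fin 3 → ℕ)} {u : Fin 3 → ℝ} (hu : ∀ i, 0 < u i) {A : Fin 3 → ℕ}
    (hA : A ∈ MinSet V u) (d : Fin 3 → ℝ) (hd : ∃ i, d i < 0) :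
    ∃ t : ℝ, 0 ≤ t ∧ (∀ i, 0 ≤ (u + t • d) i) ∧ A ∈ MinSet V (u + t • d) ∧
      ((∃ i, (u + t • d) i = 0) ∨
        ((∀ i, 0 < (u + t • d) i) ∧ ∃ R ∈ MinSet V (u + t • d), wt d R < wt d A)) := by
  let K : Set ℝ := {t | 0 ≤ t ∧ (∀ i, 0 ≤ (u + t • d) i) ∧
    ∀ μ ∈ V, wt (u + t • d) A ≤ wt (u + t • d) μ}
  have hKc : IsClosed K := by
    have hcl1 : IsClosed {t : ℝ | ∀ i, 0 ≤ (u + t • d) i} := by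
      simp only [Set.ofPred_forall]
      exact isClosed_iInter fun i => isClosed_le continuous_const (by fun_prop)
    have hcl2 : IsClosed {t : ℝ | ∀ μ ∈ V, wt (u + t • d) A ≤ wt (u + t • d) μ} := by
      simp only [Set.ofPred_forall, wt_add_smul]
      exact isClosed_iInter fun μ => isClosed_iInter fun _ => isClosed_le (by fun_prop) (by fun_prop)
    exact (isClosed_le continuous_const continuous_id).inter (hcl1.inter hcl2)
  obtain ⟨i, hi⟩ := hd
  have hKb : K ⊆ Set.Icc 0 (u i / (-d i)) := by
    rintro t ⟨h1, h2, -⟩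
    refine ⟨h1, ?_⟩
    rw [le_div_iff₀ (by linarith)]
    have := h2 i
    simp only [Pi.add_apply, Pi.smul_apply, smul_eq_mul] at this
    linarith
  have hKcomp : IsCompact K := isCompact_Icc.of_isClosed_subset hKc hKb
  have hKne : K.Nonempty := ⟨0, le_refl _, by simpa using fun i => (hu i).le, by simpa using hA.2⟩
  obtain ⟨t, ht, hmax⟩ := hKcomp.exists_isMaxOn hKne continuousOn_id
  refine ⟨t, ht.1, ht.2.1, ⟨hA.1, ht.2.2⟩, ?_⟩
  by_contra hcon
  push Not at hcon
  have hpos : ∀ i, 0 < (u + t • d) i := fun i => lt_of_le_of_ne (ht.2.1 i) (hcon.1 i).symm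
  have hA' : A ∈ MinSet V (u + t • d) := ⟨hA.1, ht.2.2⟩
  obtain ⟨ε, ⟨h1, h2, -⟩, hε⟩ :=
    ((persist hpos hA' d (hcon.2 hpos)).and (eventually_mem_nhdsWithin (a := (0 : ℝ)))).exists
  have he : u + t • d + ε • d = u + (t + ε) • d := by rw [add_smul, add_assoc]
  rw [he] at h1 h2
  have hε' : 0 < ε := hε
  have := hmax (show t + ε ∈ K from ⟨by linarith [ht.1], fun i => (h1 i).le, h2.2⟩)
  simp only [id, Set.mem_ofPred_eq] at this
  linarith

/-! ### Supports with exceptional faces only -/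

/-- `(a, b, c)` minimises the weight `(x, y, z)` over `V`. -/
def Mn (V : ℕ → ℕ → ℕ → Prop) (x y z : ℝ) (a b c : ℕ) : Prop :=
  V a b c ∧ ∀ a' b' c', V a' b' c' → x * a + y * b + z * c ≤ x * a' + y * b' + z * c'

/-- The minimal set of the weight `(x, y, z)` is exceptional: all its members except one point
`(p, q, r)` lie in a coordinate plane, and that point is at height `1` over the plane and has a
further vanishing coordinate. -/
def Exc (V : ℕ → ℕ → ℕ → Prop) (x y z : ℝ) : Prop :=
  ∃ p q r, Mn V x y z p q r ∧
    ((p = 1 ∧ (q = 0 ∨ r = 0) ∧ ∀ a b c, Mn V x y z a b c → (a = p ∧ b = q ∧ c = r) ∨ a = 0) ∨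
     (q = 1 ∧ (p = 0 ∨ r = 0) ∧ ∀ a b c, Mn V x y z a b c → (a = p ∧ b = q ∧ c = r) ∨ b = 0) ∨
     (r = 1 ∧ (p = 0 ∨ q = 0) ∧ ∀ a b c, Mn V x y z a b c → (a = p ∧ b = q ∧ c = r) ∨ c = 0))

/-- The determinant with rows `(a, b, c)`, `(a', b', c')`, `(a'', b'', c'')`. -/
def det3 (a b c a' b' c' a'' b'' c'' : ℝ) : ℝ :=
  a * (b' * c'' - c' * b'') - b * (a' * c'' - c' * a'') + c * (a' * b'' - b' * a'')

/-- The combinatorial properties of the support of an isolated singularity all of whose compact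
2-dimensional faces are exceptional. Minimal points of a positive weight lie on an affine plane
missing the origin, so that three of them are affinely independent iff `det3` is nonzero. -/
structure Good (V : ℕ → ℕ → ℕ → Prop) : Prop where
  ord : ∀ a b c, V a b c → 2 ≤ a + b + c
  ax1 : ∃ a b c, V a b c ∧ b + c ≤ 1
  ax2 : ∃ a b c, V a b c ∧ a + c ≤ 1
  ax3 : ∃ a b c, V a b c ∧ a + b ≤ 1
  pl1 : ∃ b c, V 0 b c
  pl2 : ∃ a c, V a 0 c
  pl3 : ∃ a b, V a b 0
  exc : ∀ x y z : ℝ, 0 < x → 0 < y → 0 < z → ∀ a b c a' b' c' a'' b'' c'',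
    Mn V x y z a b c → Mn V x y z a' b' c' → Mn V x y z a'' b'' c'' →
    det3 a b c a' b' c' a'' b'' c'' ≠ 0 → Exc V x y z

/-- Some positive weight has the end points of a segment of the family `𝒥` as its minimal set. -/
def Concl (V : ℕ → ℕ → ℕ → Prop) : Prop :=
  ∃ m : ℕ, 2 ≤ m ∧ ∃ x y z : ℝ, 0 < x ∧ 0 < y ∧ 0 < z ∧
    ((∀ a b c, Mn V x y z a b c ↔ (a = 0 ∧ b = 1 ∧ c = 1) ∨ (a = m ∧ b = 0 ∧ c = 0)) ∨
     (∀ a b c, Mn V x y z a b c ↔ (a = 1 ∧ b = 0 ∧ c = 1) ∨ (a = 0 ∧ b = m ∧ c = 0)) ∨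
     (∀ a b c, Mn V x y z a b c ↔ (a = 1 ∧ b = 1 ∧ c = 0) ∨ (a = 0 ∧ b = 0 ∧ c = m)))

lemma mn_swap {V : ℕ → ℕ → ℕ → Prop} {x y z : ℝ} {a b c : ℕ} :
    Mn (fun a b c => V b a c) x y z a b c ↔ Mn V y x z b a c := by
  unfold Mn
  refine and_congr Iff.rfl ⟨fun h a' b' c' h' => ?_, fun h a' b' c' h' => ?_⟩
  · linarith [h b' a' c' h']
  · linarith [h b' a' c' h']

lemma mn_cyc {V : ℕ → ℕ → ℕ → Prop} {x y z : ℝ} {a b c : ℕ} :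
    Mn (fun a b c => V c a b) x y z a b c ↔ Mn V z x y c a b := by
  unfold Mn
  refine and_congr Iff.rfl ⟨fun h a' b' c' h' => ?_, fun h a' b' c' h' => ?_⟩
  · linarith [h b' c' a' h']
  · linarith [h c' a' b' h']

lemma Good.swap {V : ℕ → ℕ → ℕ → Prop} (h : Good V) : Good (fun a b c => V b a c) where
  ord a b c hv := by have := h.ord _ _ _ hv; omega
  ax1 := by obtain ⟨a, b, c, h1, h2⟩ := h.ax2; exact ⟨b, a, c, h1, h2⟩
  ax2 := by obtain ⟨a, b, c, h1, h2⟩ := h.ax1; exact ⟨b, a, c, h1, h2⟩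
  ax3 := by obtain ⟨a, b, c, h1, h2⟩ := h.ax3; exact ⟨b, a, c, h1, by omega⟩
  pl1 := h.pl2
  pl2 := h.pl1
  pl3 := by obtain ⟨a, b, h⟩ := h.pl3; exact ⟨b, a, h⟩
  exc x y z hx hy hz a b c a' b' c' a'' b'' c'' h1 h2 h3 hd := by
    rw [mn_swap] at h1 h2 h3
    obtain ⟨p, q, r, hm, hE⟩ := h.exc y x z hy hx hz _ _ _ _ _ _ _ _ _ h1 h2 h3
      (fun h0 => hd (by unfold det3 at h0 ⊢; linarith))
    refine ⟨q, p, r, mn_swap.2 hm, ?_⟩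
    rcases hE with ⟨e1, e2, e3⟩ | ⟨e1, e2, e3⟩ | ⟨e1, e2, e3⟩
    · refine Or.inr (Or.inl ⟨e1, e2, fun a b c hh => ?_⟩)
      have := e3 _ _ _ (mn_swap.1 hh); omega
    · refine Or.inl ⟨e1, e2, fun a b c hh => ?_⟩
      have := e3 _ _ _ (mn_swap.1 hh); omega
    · refine Or.inr (Or.inr ⟨e1, e2.symm, fun a b c hh => ?_⟩)
      have := e3 _ _ _ (mn_swap.1 hh); omega

lemma Good.cyc {V : ℕ → ℕ → ℕ → Prop} (h : Good V) : Good (fun a b c => V c a b) where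
  ord a b c hv := by have := h.ord _ _ _ hv; omega
  ax1 := by obtain ⟨a, b, c, h1, h2⟩ := h.ax2; exact ⟨b, c, a, h1, by omega⟩
  ax2 := by obtain ⟨a, b, c, h1, h2⟩ := h.ax3; exact ⟨b, c, a, h1, by omega⟩
  ax3 := by obtain ⟨a, b, c, h1, h2⟩ := h.ax1; exact ⟨b, c, a, h1, by omega⟩
  pl1 := by obtain ⟨a, b, h⟩ := h.pl2; exact ⟨b, a, h⟩
  pl2 := by obtain ⟨a, b, h⟩ := h.pl3; exact ⟨b, a, h⟩
  pl3 := by obtain ⟨a, b, h⟩ := h.pl1; exact ⟨a, b, h⟩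
  exc x y z hx hy hz a b c a' b' c' a'' b'' c'' h1 h2 h3 hd := by
    rw [mn_cyc] at h1 h2 h3
    obtain ⟨p, q, r, hm, hE⟩ := h.exc z x y hz hx hy _ _ _ _ _ _ _ _ _ h1 h2 h3
      (fun h0 => hd (by unfold det3 at h0 ⊢; linarith))
    refine ⟨q, r, p, mn_cyc.2 hm, ?_⟩
    rcases hE with ⟨e1, e2, e3⟩ | ⟨e1, e2, e3⟩ | ⟨e1, e2, e3⟩
    · refine Or.inr (Or.inr ⟨e1, e2, fun a b c hh => ?_⟩)
      have := e3 _ _ _ (mn_cyc.1 hh); omega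
    · refine Or.inl ⟨e1, e2.symm, fun a b c hh => ?_⟩
      have := e3 _ _ _ (mn_cyc.1 hh); omega
    · refine Or.inr (Or.inl ⟨e1, e2.symm, fun a b c hh => ?_⟩)
      have := e3 _ _ _ (mn_cyc.1 hh); omega

lemma Concl.of_swap {V : ℕ → ℕ → ℕ → Prop} (h : Concl (fun a b c => V b a c)) : Concl V := by
  obtain ⟨m, hm, x, y, z, hx, hy, hz, h⟩ := h
  simp only [mn_swap] at h
  refine ⟨m, hm, y, x, z, hy, hx, hz, ?_⟩
  rcases h with h | h | h
  · refine Or.inr (Or.inl fun a b c => (h b a c).trans ?_); omega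
  · refine Or.inl fun a b c => (h b a c).trans ?_; omega
  · refine Or.inr (Or.inr fun a b c => (h b a c).trans ?_); omega

lemma Concl.of_cyc {V : ℕ → ℕ → ℕ → Prop} (h : Concl (fun a b c => V c a b)) : Concl V := by
  obtain ⟨m, hm, x, y, z, hx, hy, hz, h⟩ := h
  simp only [mn_cyc] at h
  refine ⟨m, hm, z, x, y, hz, hx, hy, ?_⟩
  rcases h with h | h | h
  · refine Or.inr (Or.inl fun a b c => (h b c a).trans ?_); omega
  · refine Or.inr (Or.inr fun a b c => (h b c a).trans ?_); omega
  · refine Or.inl fun a b c => (h b c a).trans ?_; omega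

/-- The set of exponents belonging to a predicate on coordinates. -/
def toSet (V : ℕ → ℕ → ℕ → Prop) : Set (Fin 3 → ℕ) := {ν | V (ν 0) (ν 1) (ν 2)}

lemma mem_minSet_toSet {V : ℕ → ℕ → ℕ → Prop} {u : Fin 3 → ℝ} {ν : Fin 3 → ℕ} :
    ν ∈ MinSet (toSet V) u ↔ Mn V (u 0) (u 1) (u 2) (ν 0) (ν 1) (ν 2) := by
  constructor
  · rintro ⟨h1, h2⟩
    refine ⟨h1, fun a b c h => ?_⟩
    have := h2 ![a, b, c] h
    simpa [wt_three] using this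
  · rintro ⟨h1, h2⟩
    refine ⟨h1, fun μ h => ?_⟩
    have := h2 _ _ _ h
    simpa [wt_three] using this

lemma Mn.persist {V : ℕ → ℕ → ℕ → Prop} {x y z : ℝ} (hx : 0 < x) (hy : 0 < y) (hz : 0 < z)
    {a b c : ℕ} (hA : Mn V x y z a b c) (d e f : ℝ)
    (hd : ∀ a' b' c', Mn V x y z a' b' c' → d * a + e * b + f * c ≤ d * a' + e * b' + f * c') :
    ∃ x' y' z' : ℝ, 0 < x' ∧ 0 < y' ∧ 0 < z' ∧
      (∃ t : ℝ, x' = x + t * d ∧ y' = y + t * e ∧ z' = z + t * f) ∧ Mn V x' y' z' a b c ∧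
      ∀ a' b' c', Mn V x' y' z' a' b' c' →
        Mn V x y z a' b' c' ∧ d * a' + e * b' + f * c' = d * a + e * b + f * c := by
  have hu : ∀ i, 0 < ![x, y, z] i := by intro i; fin_cases i <;> simpa
  have hA' : ![a, b, c] ∈ MinSet (toSet V) ![x, y, z] := mem_minSet_toSet.2 (by simpa using hA)
  obtain ⟨t, h1, h2, h3⟩ := (_root_.persist hu hA' ![d, e, f] (fun R hR => by
    have := hd _ _ _ (mem_minSet_toSet.1 hR)
    simpa [wt_three] using this)).exists
  refine ⟨x + t * d, y + t * e, z + t * f, by simpa using h1 0, by simpa using h1 1,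
    by simpa using h1 2, ⟨t, rfl, rfl, rfl⟩, by simpa using mem_minSet_toSet.1 h2, ?_⟩
  intro a' b' c' h'
  obtain ⟨k1, k2⟩ := h3 ![a', b', c'] (mem_minSet_toSet.2 (by simpa using h'))
  exact ⟨by simpa using mem_minSet_toSet.1 k1, by simpa [wt_three] using k2⟩

lemma Mn.walk {V : ℕ → ℕ → ℕ → Prop} {x y z : ℝ} (hx : 0 < x) (hy : 0 < y) (hz : 0 < z)
    {a b c : ℕ} (hA : Mn V x y z a b c) (d e f : ℝ) (hn : d < 0 ∨ e < 0 ∨ f < 0) :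
    ∃ t x' y' z' : ℝ, 0 ≤ t ∧ x' = x + t * d ∧ y' = y + t * e ∧ z' = z + t * f ∧
      0 ≤ x' ∧ 0 ≤ y' ∧ 0 ≤ z' ∧ Mn V x' y' z' a b c ∧
      ((x' = 0 ∨ y' = 0 ∨ z' = 0) ∨ (0 < x' ∧ 0 < y' ∧ 0 < z' ∧
        ∃ p q r, Mn V x' y' z' p q r ∧ d * p + e * q + f * r < d * a + e * b + f * c)) := by
  have hu : ∀ i, 0 < ![x, y, z] i := by intro i; fin_cases i <;> simpa
  have hA' : ![a, b, c] ∈ MinSet (toSet V) ![x, y, z] := mem_minSet_toSet.2 (by simpa using hA)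
  have hn' : ∃ i, ![d, e, f] i < 0 := by
    rcases hn with h | h | h
    exacts [⟨0, h⟩, ⟨1, h⟩, ⟨2, h⟩]
  obtain ⟨t, h0, h1, h2, h3⟩ := _root_.walk hu hA' ![d, e, f] hn'
  refine ⟨t, x + t * d, y + t * e, z + t * f, h0, rfl, rfl, rfl, by simpa using h1 0,
    by simpa using h1 1, by simpa using h1 2, by simpa using mem_minSet_toSet.1 h2, ?_⟩
  rcases h3 with ⟨i, hi⟩ | ⟨hp, R, hR, hlt⟩
  · left
    fin_cases i
    exacts [Or.inl (by simpa using hi), Or.inr (Or.inl (by simpa using hi)),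
      Or.inr (Or.inr (by simpa using hi))]
  · right
    exact ⟨by simpa using hp 0, by simpa using hp 1, by simpa using hp 2, R 0, R 1, R 2,
      by simpa using mem_minSet_toSet.1 hR, by simpa [wt_three] using hlt⟩

lemma Mn.eq {V : ℕ → ℕ → ℕ → Prop} {x y z : ℝ} {a b c a' b' c' : ℕ}
    (h : Mn V x y z a b c) (h' : Mn V x y z a' b' c') :
    x * a + y * b + z * c = x * a' + y * b' + z * c' :=
  le_antisymm (h.2 _ _ _ h'.1) (h'.2 _ _ _ h.1)

lemma Mn.of_eq {V : ℕ → ℕ → ℕ → Prop} {x y z : ℝ} {a b c a' b' c' : ℕ}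
    (h : Mn V x y z a b c) (h' : V a' b' c')
    (he : x * a' + y * b' + z * c' = x * a + y * b + z * c) : Mn V x y z a' b' c' :=
  ⟨h', fun _ _ _ hv => he.le.trans (h.2 _ _ _ hv)⟩

/-- If `(0,1,1)` and `(m,0,0)` are minimal together, their segment is an edge, possibly for a
nearby weight: a face containing a third point is exceptional, its other points lie in a plane
through the first axis, and tilting the weight towards that plane removes them. -/
lemma concl_of_pair {V : ℕ → ℕ → ℕ → Prop} (hV : Good V) {m : ℕ} (hm : 2 ≤ m) {x y z : ℝ}
    (hx : 0 < x) (hy : 0 < y) (hz : 0 < z) (h1 : Mn V x y z 0 1 1) (h2 : Mn V x y z m 0 0) :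
    Concl V := by
  by_cases hall : ∀ a b c, Mn V x y z a b c → (a = 0 ∧ b = 1 ∧ c = 1) ∨ (a = m ∧ b = 0 ∧ c = 0)
  · refine ⟨m, hm, x, y, z, hx, hy, hz, Or.inl fun a b c => ⟨hall a b c, ?_⟩⟩
    rintro (⟨rfl, rfl, rfl⟩ | ⟨rfl, rfl, rfl⟩) <;> assumption
  push Not at hall
  obtain ⟨a, b, c, hR, hR1, hR2⟩ := hall
  have e1 := h1.eq hR
  have e2 := h2.eq hR
  have hmR : (2 : ℝ) ≤ m := by exact_mod_cast hm
  push_cast at e1 e2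
  have hbc : b ≠ c := by
    rintro rfl
    rcases Nat.eq_zero_or_pos b with rfl | hb
    · have : (m : ℝ) = a := by
        have : x * m = x * a := by simpa using e2
        exact mul_left_cancel₀ hx.ne' this
      exact hR2 (by exact_mod_cast this.symm) rfl rfl
    · have hb' : (1 : ℝ) ≤ b := by exact_mod_cast hb
      have ha0 : (0 : ℝ) ≤ a := Nat.cast_nonneg _
      have hxa : 0 ≤ x * a := by positivity
      have hk : (y + z) * (b - 1) = - (x * a) := by linarith
      have hb1 : (b : ℝ) = 1 := by
        by_contra hne
        have : 0 < (b : ℝ) - 1 := by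
          rcases lt_or_eq_of_le hb' with h | h
          · linarith
          · exact absurd h.symm hne
        have : 0 < (y + z) * ((b : ℝ) - 1) := by positivity
        linarith
      have ha : (a : ℝ) = 0 := by
        rw [hb1] at hk
        have : x * a = 0 := by linarith
        rcases mul_eq_zero.1 this with h | h
        · exact absurd h hx.ne'
        · exact h
      exact hR1 (by exact_mod_cast ha) (by exact_mod_cast hb1) (by exact_mod_cast hb1)
  obtain ⟨p, q, r, hW, hE⟩ := hV.exc x y z hx hy hz _ _ _ _ _ _ _ _ _ h1 h2 hR (by
    unfold det3
    push_cast
    intro h0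
    have : (m : ℝ) * ((b : ℝ) - c) = 0 := by linarith
    rcases mul_eq_zero.1 this with h | h
    · linarith
    · exact hbc (by exact_mod_cast sub_eq_zero.1 h))
  have fin : ∀ x' y' z' : ℝ, 0 < x' → 0 < y' → 0 < z' → Mn V x' y' z' 0 1 1 →
      y' + z' = x' * m → (∀ a' b' c', Mn V x' y' z' a' b' c' →
        (a' = 0 ∧ b' = 1 ∧ c' = 1) ∨ (a' = m ∧ b' = 0 ∧ c' = 0)) → Concl V := by
    intro x' y' z' hx' hy' hz' hM he hl
    refine ⟨m, hm, x', y', z', hx', hy', hz', Or.inl fun a b c => ⟨hl a b c, ?_⟩⟩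
    rintro (⟨rfl, rfl, rfl⟩ | ⟨rfl, rfl, rfl⟩)
    · exact hM
    · exact hM.of_eq h2.1 (by push_cast; linarith)
  have e3 := h1.eq h2
  push_cast at e3
  rcases hE with ⟨g1, g2, g3⟩ | ⟨g1, g2, g3⟩ | ⟨g1, g2, g3⟩
  · have := g3 _ _ _ h2; omega
  · have gW := g3 _ _ _ h1
    have hWe : p = 0 ∧ q = 1 ∧ r = 1 := by omega
    have hle : ∀ a' c' : ℕ, Mn V x y z a' 0 c' → (a' : ℝ) ≤ m ∧ ((a' : ℝ) = m → c' = 0) := by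
      intro a' c' h'
      have e := h2.eq h'
      push_cast at e
      have hc : 0 ≤ z * (c' : ℝ) := by positivity
      constructor
      · by_contra hcon
        have := mul_lt_mul_of_pos_left (not_le.1 hcon) hx
        linarith
      · intro hh
        rw [hh] at e
        have : z * (c' : ℝ) = 0 := by linarith
        rcases mul_eq_zero.1 this with h | h
        · exact absurd h hz.ne'
        · exact_mod_cast h
    obtain ⟨x', y', z', hx', hy', hz', ⟨t, t1, t2, t3⟩, hM, hl⟩ :=
      h1.persist hx hy hz (-1) (-m) 0 (by
        intro a' b' c' h'
        rcases g3 _ _ _ h' with ⟨r1, r2, r3⟩ | r2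
        · have : a' = 0 ∧ b' = 1 ∧ c' = 1 := by omega
          rw [this.1, this.2.1, this.2.2]
        · subst r2
          have := (hle _ _ h').1
          push_cast
          linarith)
    refine fin x' y' z' hx' hy' hz' hM (by rw [t1, t2, t3]; linarith) ?_
    intro a' b' c' h'
    obtain ⟨k1, k2⟩ := hl _ _ _ h'
    rcases g3 _ _ _ k1 with ⟨r1, r2, r3⟩ | r2
    · left; omega
    · right
      subst r2
      push_cast at k2
      have k3 : (a' : ℝ) = m := by linarith
      exact ⟨by exact_mod_cast k3, rfl, (hle _ _ k1).2 k3⟩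
  · have gW := g3 _ _ _ h1
    have hWe : p = 0 ∧ q = 1 ∧ r = 1 := by omega
    have hle : ∀ a' b' : ℕ, Mn V x y z a' b' 0 → (a' : ℝ) ≤ m ∧ ((a' : ℝ) = m → b' = 0) := by
      intro a' c' h'
      have e := h2.eq h'
      push_cast at e
      have hc : 0 ≤ y * (c' : ℝ) := by positivity
      constructor
      · by_contra hcon
        have := mul_lt_mul_of_pos_left (not_le.1 hcon) hx
        linarith
      · intro hh
        rw [hh] at e
        have : y * (c' : ℝ) = 0 := by linarith
        rcases mul_eq_zero.1 this with h | h
        · exact absurd h hy.ne'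
        · exact_mod_cast h
    obtain ⟨x', y', z', hx', hy', hz', ⟨t, t1, t2, t3⟩, hM, hl⟩ :=
      h1.persist hx hy hz (-1) 0 (-m) (by
        intro a' b' c' h'
        rcases g3 _ _ _ h' with ⟨r1, r2, r3⟩ | r2
        · have : a' = 0 ∧ b' = 1 ∧ c' = 1 := by omega
          rw [this.1, this.2.1, this.2.2]
        · subst r2
          have := (hle _ _ h').1
          push_cast
          linarith)
    refine fin x' y' z' hx' hy' hz' hM (by rw [t1, t2, t3]; linarith) ?_
    intro a' b' c' h'
    obtain ⟨k1, k2⟩ := hl _ _ _ h'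
    rcases g3 _ _ _ k1 with ⟨r1, r2, r3⟩ | r2
    · left; omega
    · right
      subst r2
      push_cast at k2
      have k3 : (a' : ℝ) = m := by linarith
      exact ⟨by exact_mod_cast k3, (hle _ _ k1).2 k3, rfl⟩

/-! ### From the combinatorics of the support to an edge of the family `𝒥` -/

/-- An edge from `(0,1,w)` to `(a,0,b)` forces the conclusion. Decreasing the first
two weights while the edge stays minimal, one reaches either the boundary of the orthant or a new
face. As a result, either `w = 1` and `b = 0`, so that `concl_of_pair` applies, or the edge can be
replaced by one with smaller `b`. -/
lemma concl_of_edge {V : ℕ → ℕ → ℕ → Prop} (hV : Good V) {w : ℕ} (hw : 1 ≤ w) (b : ℕ) :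
    ∀ (a : ℕ) (x y z : ℝ), 2 ≤ a → 0 < x → 0 < y → 0 < z → Mn V x y z 0 1 w → Mn V x y z a 0 b →
      Concl V := by
  induction b using Nat.strong_induction_on with
  | _ b ih =>
  intro a x y z ha hx hy hz hW hQ
  have hmain : w = 1 ∧ b = 0 ∨ Concl V := by
    obtain ⟨t, X, Y, Z, ht, hX, hY, hZ, hX0, hY0, hZ0, hW', hend⟩ :=
      hW.walk hx hy hz (-1) (-a) 0 (Or.inl (by norm_num))
    have e := hW.eq hQ
    push_cast at e
    have hZz : Z = z := by linarith
    have hQ' : Mn V X Y Z a 0 b := hW'.of_eq hQ.1 (by rw [hX, hY, hZ]; push_cast; linarith)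
    have e' := hW'.eq hQ'
    push_cast at e'
    have hZp : 0 < Z := hZz ▸ hz
    have hwR : (1 : ℝ) ≤ w := by exact_mod_cast hw
    have haR : (2 : ℝ) ≤ a := by exact_mod_cast ha
    have hbR : (0 : ℝ) ≤ b := Nat.cast_nonneg _
    have hZw : Z ≤ Z * w := le_mul_of_one_le_right hZ0 hwR
    rcases hend with (h0 | h0 | h0) | ⟨pX, pY, pZ, p, q, r, hR, hlt⟩
    · -- the first weight vanishes: a point of `V` near the first axis has a smaller value
      exfalso
      obtain ⟨m, j, k, hm, hjk⟩ := hV.ax1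
      have hle := hW'.2 _ _ _ hm
      obtain ⟨p, q, hpq⟩ := hV.pl3
      have hle2 := hW'.2 _ _ _ hpq
      subst h0
      have : j = 0 ∧ k = 0 ∨ j = 1 ∧ k = 0 ∨ j = 0 ∧ k = 1 := by omega
      obtain ⟨a', b', c', hM, hlt⟩ : ∃ a' b' c', V a' b' c' ∧
          0 * (a' : ℝ) + Y * b' + Z * c' < 0 * ((0 : ℕ) : ℝ) + Y * ((1 : ℕ) : ℝ) + Z * w := by
        rcases this with ⟨rfl, rfl⟩ | ⟨rfl, rfl⟩ | ⟨rfl, rfl⟩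
        · exact ⟨_, _, _, hm, by push_cast; nlinarith⟩
        · exact ⟨_, _, _, hm, by push_cast; nlinarith⟩
        · push_cast at hle
          have hY00 : Y = 0 := by linarith
          exact ⟨_, _, _, hpq, by rw [hY00]; push_cast; nlinarith⟩
      exact absurd (hW'.2 _ _ _ hM) (not_le.2 hlt)
    · -- the second weight vanishes
      left
      obtain ⟨j, m, k, hm, hjk⟩ := hV.ax2
      have hle := hW'.2 _ _ _ hm
      rw [h0] at hle e'
      have : j = 0 ∧ k = 0 ∨ j = 1 ∧ k = 0 ∨ j = 0 ∧ k = 1 := by omega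
      have hZb : 0 ≤ Z * b := by positivity
      rcases this with ⟨rfl, rfl⟩ | ⟨rfl, rfl⟩ | ⟨rfl, rfl⟩
      · push_cast at hle; exfalso; linarith
      · push_cast at hle; exfalso; nlinarith
      · push_cast at hle
        have hw1 : (w : ℝ) ≤ 1 := by nlinarith
        have hw1' : w = 1 := le_antisymm (by exact_mod_cast hw1) hw
        refine ⟨hw1', ?_⟩
        by_contra hb
        have hb1 : (1 : ℝ) ≤ b := by exact_mod_cast Nat.one_le_iff_ne_zero.2 hb
        rcases hX0.eq_or_lt with hX00 | hX00
        · -- both the first and the second weight vanish, but the third plane meets `V`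
          obtain ⟨p, q, hpq⟩ := hV.pl3
          have hle2 := hW'.2 _ _ _ hpq
          rw [h0, ← hX00] at hle2
          push_cast at hle2
          linarith
        · have : 0 < X * a := by positivity
          nlinarith
    · exact absurd h0 hZp.ne'
    · push_cast at hlt
      have e2 := hW'.eq hR
      push_cast at e2
      rcases Nat.eq_zero_or_pos q with rfl | hq
      · right
        push_cast at hlt e2
        have hpa : (a : ℝ) < p := by linarith
        have hrb : (r : ℝ) < b := by
          have := mul_lt_mul_of_pos_left hpa pX
          by_contra hcon
          have := mul_le_mul_of_nonneg_left (not_lt.1 hcon) pZ.le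
          linarith
        have hpa' : a < p := by exact_mod_cast hpa
        exact ih r (by exact_mod_cast hrb) p X Y Z (by omega) pX pY pZ hW' hR
      · obtain ⟨p', q', r', hE, hcases⟩ := hV.exc X Y Z pX pY pZ _ _ _ _ _ _ _ _ _ hW' hQ' hR (by
          unfold det3
          push_cast
          intro h0
          have hYZ : 0 < Y + Z * w := by positivity
          have hk : Z * (0 * ((0 : ℝ) * r - b * q) - 1 * (a * r - b * p) + w * (a * q - 0 * p))
              = (Y + Z * w) * (p + a * q - a) + (X * a + Z * b - (Y + Z * w)) * p
                + a * (Y + Z * w - (X * p + Y * q + Z * r)) := by ring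
          rw [h0] at hk
          have hpos : 0 < (Y + Z * w) * (p + a * q - a) := mul_pos hYZ (by linarith)
          have r1 : X * a + Z * b - (Y + Z * w) = 0 := by linarith
          have r2 : Y + Z * w - (X * p + Y * q + Z * r) = 0 := by linarith
          rw [r1, r2] at hk
          linarith)
        have hne : ¬ (p = 0 ∧ q = 1 ∧ r = w) := by
          rintro ⟨rfl, rfl, rfl⟩
          push_cast at hlt
          linarith
        rcases hcases with ⟨g1, g2, g3⟩ | ⟨g1, g2, g3⟩ | ⟨g1, g2, g3⟩
        · have := g3 _ _ _ hQ'; omega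
        · have h1 := g3 _ _ _ hW'
          have h2 := g3 _ _ _ hR
          omega
        · have h1 := g3 _ _ _ hW'
          have h2 := g3 _ _ _ hQ'
          left; omega
  rcases hmain with ⟨rfl, rfl⟩ | h
  · exact concl_of_pair hV ha hx hy hz hW hQ
  · exact h

/-- The case of an edge from `(0,1,w)` to `(1,0,w')`: decreasing the first two weights
while it stays minimal produces a face containing an edge as in `concl_of_edge`. -/
lemma concl_of_double {V : ℕ → ℕ → ℕ → Prop} (hV : Good V) {w w' : ℕ} (hw : 1 ≤ w) (hw' : 1 ≤ w')
    {x y z : ℝ} (hx : 0 < x) (hy : 0 < y) (hz : 0 < z) (h1 : Mn V x y z 0 1 w)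
    (h2 : Mn V x y z 1 0 w') : Concl V := by
  obtain ⟨t, X, Y, Z, ht, hX, hY, hZ, hX0, hY0, hZ0, hW, hend⟩ :=
    h1.walk hx hy hz (-1) (-1) 0 (Or.inl (by norm_num))
  have e := h1.eq h2
  push_cast at e
  have hZz : Z = z := by linarith
  have hQ : Mn V X Y Z 1 0 w' := hW.of_eq h2.1 (by rw [hX, hY, hZ]; push_cast; linarith)
  have e' := hW.eq hQ
  push_cast at e'
  have hZp : 0 < Z := hZz ▸ hz
  have hwR : (1 : ℝ) ≤ w := by exact_mod_cast hw
  have hwR' : (1 : ℝ) ≤ w' := by exact_mod_cast hw'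
  have hZw : Z ≤ Z * w := le_mul_of_one_le_right hZ0 hwR
  have hZw' : Z ≤ Z * w' := le_mul_of_one_le_right hZ0 hwR'
  -- the point of `V` in the third coordinate plane keeps `X` and `Y` from vanishing together
  obtain ⟨p0, q0, hpq⟩ := hV.pl3
  have hle2 := hW.2 _ _ _ hpq
  push_cast at hle2
  rcases hend with (h0 | h0 | h0) | ⟨pX, pY, pZ, p, q, r, hR, hlt⟩
  · exfalso
    obtain ⟨m, j, k, hm, hjk⟩ := hV.ax1
    have hle := hW.2 _ _ _ hm
    rw [h0] at hle e' hle2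
    have : j = 0 ∧ k = 0 ∨ j = 1 ∧ k = 0 ∨ j = 0 ∧ k = 1 := by omega
    rcases this with ⟨rfl, rfl⟩ | ⟨rfl, rfl⟩ | ⟨rfl, rfl⟩ <;> push_cast at hle
    · linarith
    · linarith
    · have : Y = 0 := by linarith
      rw [this] at hle2
      linarith
  · exfalso
    obtain ⟨j, m, k, hm, hjk⟩ := hV.ax2
    have hle := hW.2 _ _ _ hm
    rw [h0] at hle e' hle2
    have : j = 0 ∧ k = 0 ∨ j = 1 ∧ k = 0 ∨ j = 0 ∧ k = 1 := by omega
    rcases this with ⟨rfl, rfl⟩ | ⟨rfl, rfl⟩ | ⟨rfl, rfl⟩ <;> push_cast at hle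
    · linarith
    · linarith
    · have : X = 0 := by linarith
      rw [this] at hle2
      linarith
  · exact absurd h0 hZp.ne'
  · push_cast at hlt
    have e2 := hW.eq hR
    push_cast at e2
    have hpq2 : 2 ≤ p + q := by
      have : (1 : ℝ) < (p + q : ℕ) := by push_cast; linarith
      have : 1 < p + q := by exact_mod_cast this
      omega
    obtain ⟨p', q', r', hE, hcases⟩ := hV.exc X Y Z pX pY pZ _ _ _ _ _ _ _ _ _ hW hQ hR (by
      unfold det3
      push_cast
      intro h0
      have hYZ : 0 < Y + Z * w := by positivity
      have hk : Z * (0 * ((0 : ℝ) * r - w' * q) - 1 * (1 * r - w' * p) + w * (1 * q - 0 * p))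
          = (Y + Z * w) * (p + q - 1) + (X + Z * w' - (Y + Z * w)) * p
            + (Y + Z * w - (X * p + Y * q + Z * r)) := by ring
      rw [h0] at hk
      have hpos : 0 < (Y + Z * w) * (p + q - 1) := mul_pos hYZ (by linarith)
      have r1 : X + Z * w' - (Y + Z * w) = 0 := by linarith
      have r2 : Y + Z * w - (X * p + Y * q + Z * r) = 0 := by linarith
      rw [r1, r2] at hk
      linarith)
    rcases hcases with ⟨g1, g2, g3⟩ | ⟨g1, g2, g3⟩ | ⟨g1, g2, g3⟩
    · have k1 := g3 _ _ _ hQ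
      have k2 := g3 _ _ _ hR
      have hp0 : p = 0 := by omega
      subst hp0
      exact (concl_of_edge hV.swap hw' r q Y X Z (by omega) pY pX pZ (mn_swap.2 hQ)
        (mn_swap.2 hR)).of_swap
    · have k1 := g3 _ _ _ hW
      have k2 := g3 _ _ _ hR
      have hp0 : q = 0 := by omega
      subst hp0
      exact concl_of_edge hV hw r p X Y Z (by omega) pX pY pZ hW hR
    · have k1 := g3 _ _ _ hW
      have k2 := g3 _ _ _ hQ
      omega

/-- The case where `V` has no point on the third axis, but has a point `(0,1,w)`. -/
lemma concl_of_nonconvenient' {V : ℕ → ℕ → ℕ → Prop} (hV : Good V) (hno : ¬ ∃ c, V 0 0 c)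
    (hw : ∃ w, V 0 1 w) : Concl V := by
  classical
  obtain ⟨w, hVw, hwmin⟩ : ∃ w, V 0 1 w ∧ ∀ w', V 0 1 w' → w ≤ w' :=
    ⟨Nat.find hw, Nat.find_spec hw, fun w' h => Nat.find_min' hw h⟩
  have hw1 : 1 ≤ w := by have := hV.ord _ _ _ hVw; omega
  have hwR : (1 : ℝ) ≤ w := by exact_mod_cast hw1
  by_cases hd : ∃ w', V 1 0 w'
  · obtain ⟨v, hVv, hvmin⟩ : ∃ w, V 1 0 w ∧ ∀ w', V 1 0 w' → w ≤ w' :=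
      ⟨Nat.find hd, Nat.find_spec hd, fun w' h => Nat.find_min' hd h⟩
    have hv1 : 1 ≤ v := by have := hV.ord _ _ _ hVv; omega
    have hvR : (1 : ℝ) ≤ v := by exact_mod_cast hv1
    have key : Mn V (2 * w + v) (w + 2 * v) 1 0 1 w := by
      refine ⟨hVw, fun a b c h => ?_⟩
      have hc : (0 : ℝ) ≤ c := Nat.cast_nonneg _
      have hb : (0 : ℝ) ≤ b := Nat.cast_nonneg _
      have ha : (0 : ℝ) ≤ a := Nat.cast_nonneg _
      have : (a = 0 ∧ b = 0) ∨ (a = 0 ∧ b = 1) ∨ (a = 1 ∧ b = 0) ∨ 2 ≤ a + b := by omega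
      rcases this with ⟨rfl, rfl⟩ | ⟨rfl, rfl⟩ | ⟨rfl, rfl⟩ | h2
      · exact absurd ⟨c, h⟩ hno
      · have : (w : ℝ) ≤ c := by exact_mod_cast hwmin _ h
        push_cast; linarith
      · have : (v : ℝ) ≤ c := by exact_mod_cast hvmin _ h
        push_cast; linarith
      · have h2' : (2 : ℝ) ≤ a + b := by exact_mod_cast h2
        push_cast
        nlinarith
    exact concl_of_double hV hw1 hv1 (by linarith) (by linarith) one_pos key
      (key.of_eq hVv (by push_cast; ring))
  · have hpl : ∃ a, ∃ c, V a 0 c := hV.pl2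
    obtain ⟨a, ⟨b0, hb0⟩, hamin⟩ : ∃ a, (∃ c, V a 0 c) ∧ ∀ a', (∃ c, V a' 0 c) → a ≤ a' :=
      ⟨Nat.find hpl, Nat.find_spec hpl, fun w' h => Nat.find_min' hpl h⟩
    have hbe : ∃ b, V a 0 b := ⟨b0, hb0⟩
    obtain ⟨b, hVb, hbmin⟩ : ∃ w, V a 0 w ∧ ∀ w', V a 0 w' → w ≤ w' :=
      ⟨Nat.find hbe, Nat.find_spec hbe, fun w' h => Nat.find_min' hbe h⟩
    have ha2 : 2 ≤ a := by
      by_contra hcon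
      have : a = 0 ∨ a = 1 := by omega
      rcases this with rfl | rfl
      · exact hno ⟨b, hVb⟩
      · exact hd ⟨b, hVb⟩
    have haR : (2 : ℝ) ≤ a := by exact_mod_cast ha2
    have hbR : (0 : ℝ) ≤ b := Nat.cast_nonneg _
    -- a weight close to the third axis, for which both points are minimal
    have hy : (0 : ℝ) < a * (w + b + 1) + b - w := by nlinarith
    have key : Mn V (w + b + 1) (a * (w + b + 1) + b - w) 1 a 0 b := by
      refine ⟨hVb, fun p q r h => ?_⟩
      have hr : (0 : ℝ) ≤ r := Nat.cast_nonneg _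
      have hp : (0 : ℝ) ≤ p := Nat.cast_nonneg _
      have : q = 0 ∨ (q = 1 ∧ p = 0) ∨ (q = 1 ∧ 1 ≤ p) ∨ 2 ≤ q := by omega
      rcases this with rfl | ⟨rfl, rfl⟩ | ⟨rfl, h1⟩ | h1
      · rcases (hamin p ⟨r, h⟩).eq_or_lt with rfl | h1
        · have : (b : ℝ) ≤ r := by exact_mod_cast hbmin _ h
          push_cast; linarith
        · have h1' : (a : ℝ) + 1 ≤ p := by exact_mod_cast h1
          push_cast
          nlinarith
      · have : (w : ℝ) ≤ r := by exact_mod_cast hwmin _ h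
        push_cast; linarith
      · have h1' : (1 : ℝ) ≤ p := by exact_mod_cast h1
        push_cast
        nlinarith
      · have h1' : (2 : ℝ) ≤ q := by exact_mod_cast h1
        have k1 := mul_le_mul_of_nonneg_left h1' hy.le
        have k2 : 0 ≤ (w + b + 1 : ℝ) * p := by positivity
        push_cast
        nlinarith
    exact concl_of_edge hV hw1 b a _ _ _ ha2 (by linarith) hy one_pos
      (key.of_eq hVw (by push_cast; ring)) key

lemma concl_of_nonconvenient {V : ℕ → ℕ → ℕ → Prop} (hV : Good V) (hno : ¬ ∃ c, V 0 0 c) :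
    Concl V := by
  obtain ⟨a, b, c, h, hab⟩ := hV.ax3
  have : (a = 0 ∧ b = 0) ∨ (a = 0 ∧ b = 1) ∨ (a = 1 ∧ b = 0) := by omega
  rcases this with ⟨rfl, rfl⟩ | ⟨rfl, rfl⟩ | ⟨rfl, rfl⟩
  · exact absurd ⟨c, h⟩ hno
  · exact concl_of_nonconvenient' hV hno ⟨c, h⟩
  · exact (concl_of_nonconvenient' hV.swap hno ⟨c, h⟩).of_swap

/-- The case where `V` meets all three axes: the vertex `(0,0,c)` on the third axis lies in a compact
2-dimensional face, which is exceptional and has an edge as in `concl_of_edge` or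
`concl_of_double`. -/
lemma concl_of_convenient {V : ℕ → ℕ → ℕ → Prop} (hV : Good V) (h1 : ∃ a, V a 0 0)
    (h2 : ∃ b, V 0 b 0) (h3 : ∃ c, V 0 0 c) : Concl V := by
  classical
  obtain ⟨a0, ha0⟩ := h1
  obtain ⟨b0, hb0⟩ := h2
  obtain ⟨c, hc, hcmin⟩ : ∃ c, V 0 0 c ∧ ∀ c', V 0 0 c' → c ≤ c' :=
    ⟨Nat.find h3, Nat.find_spec h3, fun w' h => Nat.find_min' h3 h⟩
  have hc2 : 2 ≤ c := by have := hV.ord _ _ _ hc; omega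
  have hcR : (2 : ℝ) ≤ c := by exact_mod_cast hc2
  have start : Mn V c c 1 0 0 c := by
    refine ⟨hc, fun p q r h => ?_⟩
    have hr : (0 : ℝ) ≤ r := Nat.cast_nonneg _
    have : (p = 0 ∧ q = 0) ∨ 1 ≤ p + q := by omega
    rcases this with ⟨rfl, rfl⟩ | hpq
    · have : (c : ℝ) ≤ r := by exact_mod_cast hcmin _ h
      push_cast; linarith
    · have : (1 : ℝ) ≤ p + q := by exact_mod_cast hpq
      push_cast
      nlinarith
  obtain ⟨t, X, Y, Z, ht, hX, hY, hZ, hX0, hY0, hZ0, hP, hend⟩ :=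
    start.walk (by linarith) (by linarith) one_pos (-1) 0 0 (Or.inl (by norm_num))
  have hZ1 : Z = 1 := by linarith
  have hYc : Y = c := by linarith
  rcases hend with (h0 | h0 | h0) | ⟨pX, pY, pZ, p, q, r, hR, hlt⟩
  · have := hP.2 _ _ _ ha0
    rw [h0, hZ1] at this
    push_cast at this
    linarith
  · linarith
  · linarith
  push_cast at hlt
  have hp1 : 1 ≤ p := by
    have : (0 : ℝ) < p := by linarith
    exact_mod_cast this
  have hpR : (1 : ℝ) ≤ p := by exact_mod_cast hp1
  have hqR : (0 : ℝ) ≤ q := Nat.cast_nonneg _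
  obtain ⟨t', X', Y', Z', ht', hX', hY', hZ', hX0', hY0', hZ0', hP', hend'⟩ :=
    hP.walk pX pY pZ q (-p) 0 (Or.inr (Or.inl (by linarith)))
  have hZ1' : Z' = 1 := by linarith
  have hXpos : 0 < X' := by
    rw [hX']
    have := mul_nonneg ht' hqR
    linarith
  have e := hP.eq hR
  push_cast at e
  have hR' : Mn V X' Y' Z' p q r := hP'.of_eq hR.1 (by rw [hX', hY', hZ']; push_cast; linarith)
  rcases hend' with (h0 | h0 | h0) | ⟨pX', pY', pZ', p', q', r', hS, hlt'⟩
  · linarith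
  · have := hP'.2 _ _ _ hb0
    rw [h0, hZ1'] at this
    push_cast at this
    linarith
  · linarith
  push_cast at hlt'
  obtain ⟨p'', q'', r'', hE, hcases⟩ := hV.exc X' Y' Z' pX' pY' pZ' _ _ _ _ _ _ _ _ _ hP' hR' hS
    (by
      unfold det3
      push_cast
      have : (0 : ℝ) < c * (p * q' - q * p') := mul_pos (by linarith) (by linarith)
      intro h0
      linarith)
  have hq1 : 1 ≤ q' := by
    rcases Nat.eq_zero_or_pos q' with rfl | h
    · exfalso
      have : (0 : ℝ) ≤ q * p' := by positivity
      push_cast at hlt'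
      linarith
    · exact h
  -- the face contains `(0,0,c)`, a point with positive first and a point with positive second
  -- coordinate
  have hord := hV.ord _ _ _ hR.1
  have hord' := hV.ord _ _ _ hS.1
  rcases hcases with ⟨g1, g2, g3⟩ | ⟨g1, g2, g3⟩ | ⟨g1, g2, g3⟩
  · -- `(p, q, r)` is the apex over the first plane
    have k2 := g3 _ _ _ hR'
    have k3 := g3 _ _ _ hS
    have hpe : p = 1 := by omega
    have hp'0 : p' = 0 := by
      rcases k3 with k3 | k3
      · exfalso
        have e1 : p' = p := by omega
        have e2 : q' = q := by omega
        rw [e1, e2] at hlt'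
        linarith
      · exact k3
    subst hpe hp'0
    have : q = 0 ∨ r = 0 := by omega
    rcases this with rfl | rfl
    · have hr1 : 1 ≤ r := by omega
      rcases hq1.eq_or_lt with rfl | hq2
      · rcases Nat.eq_zero_or_pos r' with rfl | hr'
        · omega
        · exact concl_of_double hV hr' hr1 pX' pY' pZ' hS hR'
      · exact (concl_of_edge hV.swap hr1 r' q' Y' X' Z' hq2 pY' pX' pZ' (mn_swap.2 hR')
          (mn_swap.2 hS)).of_swap
    · -- `(1, q, 0)` and `(0, 0, c)` are the ends of an edge as in `concl_of_edge`, up to rotation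
      have hq1' : 1 ≤ q := by omega
      exact (concl_of_edge hV.cyc.cyc hq1' 0 c Z' X' Y' hc2 pZ' pX' pY'
        (mn_cyc.2 (mn_cyc.2 hR')) (mn_cyc.2 (mn_cyc.2 hP'))).of_cyc.of_cyc
  · have k2 := g3 _ _ _ hS
    have k3 := g3 _ _ _ hR'
    have hqe : q' = 1 := by omega
    have hq0 : q = 0 := by
      rcases k3 with k3 | k3
      · exfalso
        have e1 : p' = p := by omega
        have e2 : q' = q := by omega
        rw [e1, e2] at hlt'
        linarith
      · exact k3
    subst hqe hq0
    have : p' = 0 ∨ r' = 0 := by omega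
    rcases this with rfl | rfl
    · have hr1 : 1 ≤ r' := by omega
      rcases hp1.eq_or_lt with rfl | hp2
      · exact concl_of_double hV hr1 (by omega) pX' pY' pZ' hS hR'
      · exact concl_of_edge hV hr1 r p X' Y' Z' hp2 pX' pY' pZ' hS hR'
    · have hq1' : 1 ≤ p' := by omega
      exact (concl_of_edge hV.swap.cyc.cyc hq1' 0 c Z' Y' X' hc2 pZ' pY' pX'
        (mn_cyc.2 (mn_cyc.2 (mn_swap.2 hS)))
        (mn_cyc.2 (mn_cyc.2 (mn_swap.2 hP')))).of_cyc.of_cyc.of_swap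
  · have := g3 _ _ _ hP'
    omega

/-- A support missing some axis and a support meeting all three axes are treated separately. -/
theorem Good.concl {V : ℕ → ℕ → ℕ → Prop} (hV : Good V) : Concl V := by
  by_cases h3 : ∃ c, V 0 0 c
  · by_cases h2 : ∃ c, V 0 c 0
    · by_cases h1 : ∃ c, V c 0 0
      · exact concl_of_convenient hV h1 h2 h3
      · exact (concl_of_nonconvenient hV.cyc h1).of_cyc
    · exact (concl_of_nonconvenient hV.cyc.cyc h2).of_cyc.of_cyc
  · exact concl_of_nonconvenient hV h3

/-! ### Compact faces as convex hulls of minimal exponents -/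

/-- The lattice point with exponent `ν`. -/
def pt (ν : Fin 3 → ℕ) : Fin 3 → ℝ := fun i => (ν i : ℝ)

lemma pt_injective : Function.Injective pt := fun a b h =>
  funext fun i => by have := congrFun h i; simpa [pt] using this

lemma pt_mem_nDiag {f : (Fin 3 → ℂ) → ℂ} {ν : Fin 3 → ℕ} (h : ν ∈ NSupp f) : pt ν ∈ NDiag f :=
  subset_convexHull ℝ _ ⟨ν, h, fun _ => le_refl _⟩

lemma convex_halfspace (u : Fin 3 → ℝ) (l : ℝ) : Convex ℝ {x : Fin 3 → ℝ | l ≤ ∑ i, u i * x i} := by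
  intro x hx y hy a b ha hb hab
  simp only [Set.mem_ofPred_eq, Fin.sum_univ_three, Pi.add_apply, Pi.smul_apply, smul_eq_mul] at *
  have h1 := mul_le_mul_of_nonneg_left hx ha
  have h2 := mul_le_mul_of_nonneg_left hy hb
  have : l = a * l + b * l := by rw [← add_mul, hab, one_mul]
  linarith

lemma le_of_mem_nDiag {f : (Fin 3 → ℂ) → ℂ} {u : Fin 3 → ℝ} (hu : ∀ i, 0 < u i) {A : Fin 3 → ℕ}
    (hA : A ∈ MinSet (NSupp f) u) {x : Fin 3 → ℝ} (hx : x ∈ NDiag f) :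
    wt u A ≤ ∑ i, u i * x i := by
  refine convexHull_min (s := {x : Fin 3 → ℝ | ∃ ν ∈ NSupp f, ∀ i, (ν i : ℝ) ≤ x i}) ?_
    (convex_halfspace u (wt u A)) hx
  rintro y ⟨ν, hν, hle⟩
  exact (hA.2 ν hν).trans (Finset.sum_le_sum fun i _ => mul_le_mul_of_nonneg_left (hle i) (hu i).le)

lemma ell_eq {f : (Fin 3 → ℂ) → ℂ} {u : Fin 3 → ℝ} (hu : ∀ i, 0 < u i) {A : Fin 3 → ℕ}
    (hA : A ∈ MinSet (NSupp f) u) : ell u (NDiag f) = wt u A := by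
  refine IsLeast.csInf_eq ⟨⟨pt A, pt_mem_nDiag hA.1, rfl⟩, ?_⟩
  rintro _ ⟨x, hx, rfl⟩
  exact le_of_mem_nDiag hu hA hx

lemma pt_mem_faceOf {f : (Fin 3 → ℂ) → ℂ} {u : Fin 3 → ℝ} (hu : ∀ i, 0 < u i) {ν : Fin 3 → ℕ}
    (hν : ν ∈ NSupp f) : pt ν ∈ faceOf u (NDiag f) ↔ ν ∈ MinSet (NSupp f) u := by
  obtain ⟨A, hA⟩ := minSet_nonempty ⟨ν, hν⟩ hu
  constructor
  · rintro ⟨-, h⟩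
    rw [ell_eq hu hA] at h
    exact ⟨hν, fun μ hμ => (le_of_eq h).trans (hA.2 μ hμ)⟩
  · intro h
    exact ⟨pt_mem_nDiag hν, (ell_eq hu h).symm⟩

/-- A compact face is the convex hull of the minimal exponents of its weight. -/
lemma faceOf_eq {f : (Fin 3 → ℂ) → ℂ} (hne : (NSupp f).Nonempty) {u : Fin 3 → ℝ}
    (hu : ∀ i, 0 < u i) : faceOf u (NDiag f) = convexHull ℝ (pt '' MinSet (NSupp f) u) := by
  obtain ⟨A, hA⟩ := minSet_nonempty hne hu
  apply Set.Subset.antisymm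
  · -- the points of larger weight, together with the convex hull, form a convex set
    let C : Set (Fin 3 → ℝ) := {x | wt u A ≤ ∑ i, u i * x i ∧
      (∑ i, u i * x i = wt u A → x ∈ convexHull ℝ (pt '' MinSet (NSupp f) u))}
    have hC : Convex ℝ C := by
      intro x hx y hy a b ha hb hab
      refine ⟨convex_halfspace u _ hx.1 hy.1 ha hb hab, fun he => ?_⟩
      have hsum : ∑ i, u i * (a • x + b • y) i = a * ∑ i, u i * x i + b * ∑ i, u i * y i := by
        simp only [Fin.sum_univ_three, Pi.add_apply, Pi.smul_apply, smul_eq_mul]; ring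
      rw [hsum] at he
      rcases ha.eq_or_lt with rfl | ha'
      · have hb1 : b = 1 := by linarith
        subst hb1
        rw [zero_smul, zero_add, one_smul]
        exact hy.2 (by linarith)
      rcases hb.eq_or_lt with rfl | hb'
      · have hb1 : a = 1 := by linarith
        subst hb1
        rw [zero_smul, add_zero, one_smul]
        exact hx.2 (by linarith)
      have e : wt u A = a * wt u A + b * wt u A := by rw [← add_mul, hab, one_mul]
      have h1 := mul_le_mul_of_nonneg_left hx.1 ha
      have h2 := mul_le_mul_of_nonneg_left hy.1 hb
      exact convex_convexHull ℝ _
        (hx.2 (mul_left_cancel₀ ha'.ne' (by linarith)))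
        (hy.2 (mul_left_cancel₀ hb'.ne' (by linarith))) ha hb hab
    rintro x ⟨hx, he⟩
    rw [ell_eq hu hA] at he
    refine (convexHull_min (s := {x | ∃ ν ∈ NSupp f, ∀ i, (ν i : ℝ) ≤ x i}) ?_ hC hx).2 he
    rintro y ⟨ν, hν, hle⟩
    have hterm : ∀ i ∈ Finset.univ, u i * (ν i : ℝ) ≤ u i * y i :=
      fun i _ => mul_le_mul_of_nonneg_left (hle i) (hu i).le
    have h1 : wt u ν ≤ ∑ i, u i * y i := Finset.sum_le_sum hterm
    refine ⟨(hA.2 ν hν).trans h1, fun h => ?_⟩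
    have h2 : wt u ν = ∑ i, u i * y i := le_antisymm h1 (h.le.trans (hA.2 ν hν))
    have h3 := (Finset.sum_eq_sum_iff_of_le hterm).1 h2
    have : y = pt ν := funext fun i => (mul_left_cancel₀ (hu i).ne' (h3 i (Finset.mem_univ i))).symm
    rw [this]
    exact subset_convexHull ℝ _ ⟨ν, ⟨hν, fun μ hμ => h2.le.trans (h.le.trans (hA.2 μ hμ))⟩, rfl⟩
  · refine convexHull_min ?_ ?_
    · rintro _ ⟨ν, hν, rfl⟩
      exact (pt_mem_faceOf hu hν.1).2 hν
    · intro x hx y hy a b ha hb hab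
      refine ⟨convex_convexHull ℝ _ hx.1 hy.1 ha hb hab, ?_⟩
      have hsum : ∑ i, u i * (a • x + b • y) i = a * ∑ i, u i * x i + b * ∑ i, u i * y i := by
        simp only [Fin.sum_univ_three, Pi.add_apply, Pi.smul_apply, smul_eq_mul]; ring
      rw [hsum, hx.2, hy.2, ← add_mul, hab, one_mul]

lemma faceDim_convexHull (s : Set (Fin 3 → ℝ)) :
    faceDim (convexHull ℝ s) = Module.finrank ℝ (vectorSpan ℝ s) := by
  unfold faceDim
  rw [affineSpan_convexHull, direction_affineSpan]

lemma finrank_vectorSpan_le_one {s : Set (Fin 3 → ℝ)} (v : Fin 3 → ℝ)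
    (h : ∀ x ∈ s, ∀ y ∈ s, ∃ c : ℝ, c • v = x - y) : Module.finrank ℝ (vectorSpan ℝ s) ≤ 1 := by
  have hle : vectorSpan ℝ s ≤ Submodule.span ℝ {v} := by
    refine Submodule.span_le.2 ?_
    rintro _ ⟨x, hx, y, hy, rfl⟩
    exact Submodule.mem_span_singleton.2 (h x hx y hy)
  refine (Submodule.finrank_mono hle).trans ?_
  have h1 := finrank_span_finset_le_card (R := ℝ) ({v} : Finset (Fin 3 → ℝ))
  rwa [Set.finrank, Finset.coe_singleton, Finset.card_singleton] at h1

lemma finrank_vectorSpan_le_two {s : Set (Fin 3 → ℝ)} (v w : Fin 3 → ℝ)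
    (h : ∀ x ∈ s, ∀ y ∈ s, ∃ c d : ℝ, c • v + d • w = x - y) :
    Module.finrank ℝ (vectorSpan ℝ s) ≤ 2 := by
  have hle : vectorSpan ℝ s ≤ Submodule.span ℝ {v, w} := by
    refine Submodule.span_le.2 ?_
    rintro _ ⟨x, hx, y, hy, rfl⟩
    exact Submodule.mem_span_pair.2 (h x hx y hy)
  refine (Submodule.finrank_mono hle).trans ?_
  have h1 := finrank_span_finset_le_card (R := ℝ) ({v, w} : Finset (Fin 3 → ℝ))
  have h2 : ({v, w} : Finset (Fin 3 → ℝ)).card ≤ 2 := Finset.card_le_two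
  rw [Set.finrank, Finset.coe_pair] at h1
  exact h1.trans h2

lemma eq_of_finrank_vectorSpan_eq_zero {s : Set (Fin 3 → ℝ)}
    (h : Module.finrank ℝ (vectorSpan ℝ s) = 0) {x y : Fin 3 → ℝ} (hx : x ∈ s) (hy : y ∈ s) :
    x = y := by
  have h0 : vectorSpan ℝ s = ⊥ := Submodule.finrank_eq_zero.1 h
  have := vsub_mem_vectorSpan ℝ hx hy
  rw [h0, Submodule.mem_bot] at this
  exact sub_eq_zero.1 this

/-- A minimal set containing three linearly independent exponents spans a 2-dimensional face. -/
lemma finrank_eq_two {V : Set (Fin 3 → ℕ)} {u : Fin 3 → ℝ} (hu : ∀ i, 0 < u i)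
    {A B C : Fin 3 → ℕ} (hA : A ∈ MinSet V u) (hB : B ∈ MinSet V u) (hC : C ∈ MinSet V u)
    (hd : det3 (A 0) (A 1) (A 2) (B 0) (B 1) (B 2) (C 0) (C 1) (C 2) ≠ 0) :
    Module.finrank ℝ (vectorSpan ℝ (pt '' MinSet V u)) = 2 := by
  apply le_antisymm
  · refine finrank_vectorSpan_le_two ![u 1, - u 0, 0] ![u 2, 0, - u 0] ?_
    rintro _ ⟨x, hx, rfl⟩ _ ⟨y, hy, rfl⟩
    have e : wt u x = wt u y := le_antisymm (hx.2 _ hy.1) (hy.2 _ hx.1)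
    rw [wt_three, wt_three] at e
    have h0 := (hu 0).ne'
    refine ⟨-((x 1 : ℝ) - y 1) / u 0, -((x 2 : ℝ) - y 2) / u 0, ?_⟩
    ext i
    fin_cases i
    · simp [pt]; field_simp; linarith
    · simp [pt]; field_simp; ring
    · simp [pt]; field_simp; ring
  · by_contra hcon
    obtain ⟨v, hv⟩ := finrank_le_one_iff.1
      (show Module.finrank ℝ (vectorSpan ℝ (pt '' MinSet V u)) ≤ 1 by omega)
    have hAm := Set.mem_image_of_mem pt hA
    obtain ⟨s, hs⟩ := hv ⟨_, vsub_mem_vectorSpan ℝ (Set.mem_image_of_mem pt hB) hAm⟩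
    obtain ⟨t, ht⟩ := hv ⟨_, vsub_mem_vectorSpan ℝ (Set.mem_image_of_mem pt hC) hAm⟩
    have hs' : ∀ i, (B i : ℝ) = A i + s * (v : Fin 3 → ℝ) i := fun i => by
      have := congrFun (congrArg Subtype.val hs) i
      simp [pt] at this; linarith
    have ht' : ∀ i, (C i : ℝ) = A i + t * (v : Fin 3 → ℝ) i := fun i => by
      have := congrFun (congrArg Subtype.val ht) i
      simp [pt] at this; linarith
    apply hd
    unfold det3
    rw [hs' 0, hs' 1, hs' 2, ht' 0, ht' 1, ht' 2]
    ring

/-- The vertices of a face are the minimal exponents that are the only minimal exponent of some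
other positive weight. -/
lemma mem_vtxOf {f : (Fin 3 → ℂ) → ℂ} (hne : (NSupp f).Nonempty) {u : Fin 3 → ℝ}
    (hu : ∀ i, 0 < u i) {A : Fin 3 → ℝ} : A ∈ vtxOf f (faceOf u (NDiag f)) ↔
      ∃ ν ∈ MinSet (NSupp f) u, A = pt ν ∧
        ∃ u' : Fin 3 → ℝ, (∀ i, 0 < u' i) ∧ MinSet (NSupp f) u' = {ν} := by
  constructor
  · rintro ⟨⟨u', hu', he⟩, hA⟩
    rw [faceOf_eq hne hu'] at he
    have hall : ∀ μ ∈ MinSet (NSupp f) u', pt μ = A := fun μ hμ => by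
      have : pt μ ∈ ({A} : Set (Fin 3 → ℝ)) := by
        rw [he]; exact subset_convexHull ℝ _ ⟨μ, hμ, rfl⟩
      simpa using this
    obtain ⟨ν, hν⟩ := minSet_nonempty hne hu'
    have hνA := hall ν hν
    subst hνA
    refine ⟨ν, (pt_mem_faceOf hu hν.1).1 hA, rfl, u', hu', ?_⟩
    ext μ
    simp only [Set.mem_singleton_iff]
    exact ⟨fun h => pt_injective (hall μ h), fun h => h ▸ hν⟩
  · rintro ⟨ν, hν, rfl, u', hu', he⟩
    refine ⟨⟨u', hu', ?_⟩, (pt_mem_faceOf hu hν.1).2 hν⟩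
    rw [faceOf_eq hne hu', he, Set.image_singleton, convexHull_singleton]

lemma wt_single (j : Fin 3) (c : ℝ) (ν : Fin 3 → ℕ) : wt (Pi.single j c) ν = c * ν j := by
  unfold wt
  rw [Finset.sum_eq_single j]
  · simp
  · intro b _ hb; simp [Pi.single_eq_of_ne hb]
  · simp

/-- An exceptional face with respect to an axis, in terms of its lattice points. -/
lemma exc_data {f : (Fin 3 → ℂ) → ℂ} (hne : (NSupp f).Nonempty) {u : Fin 3 → ℝ}
    (hu : ∀ i, 0 < u i) (hj : ∀ j, ∃ ν ∈ MinSet (NSupp f) u, ν j ≠ 0) {i : Fin 3}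
    (hE : ExcWrt f i (faceOf u (NDiag f))) :
    ∃ W ∈ MinSet (NSupp f) u, ∃ j, j ≠ i ∧ W j = 1 ∧ (∀ k, k ≠ i → k ≠ j → W k = 0) ∧
      ∀ ν ∈ MinSet (NSupp f) u, ν = W ∨ ν j = 0 := by
  obtain ⟨_, hW, hdist, T, -, ⟨j, hji, hTj⟩, hvt⟩ := hE
  obtain ⟨W, hWm, rfl, -⟩ := (mem_vtxOf hne hu).1 hW
  have hsum : ∑ k ∈ Finset.univ.erase i, (W k) ^ 2 = 1 := by
    unfold distAxis at hdist
    rw [Real.sqrt_eq_one] at hdist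
    simp only [pt] at hdist
    exact_mod_cast hdist
  have hWj : (W j) ^ 2 ≤ 1 := by
    rw [← hsum]
    exact Finset.single_le_sum (f := fun k => (W k) ^ 2) (fun _ _ => Nat.zero_le _)
      (Finset.mem_erase.2 ⟨hji, Finset.mem_univ j⟩)
  have hWj1 : W j ≤ 1 := by nlinarith
  have hT : ∀ ν ∈ MinSet (NSupp f) u, ν ≠ W →
      (∃ u' : Fin 3 → ℝ, (∀ i, 0 < u' i) ∧ MinSet (NSupp f) u' = {ν}) → ν j = 0 := by
    intro ν hν hνW hu'
    have h1 : pt ν ∈ vtxOf f T := by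
      rw [hvt]
      exact ⟨(mem_vtxOf hne hu).2 ⟨ν, hν, rfl, hu'⟩, fun h => hνW (pt_injective h)⟩
    have h2 := hTj h1.2
    simpa [pt] using h2
  have hall : ∀ ν ∈ MinSet (NSupp f) u, ν = W ∨ ν j = 0 := by
    intro ν hν
    by_contra hcon
    push Not at hcon
    obtain ⟨hνW, hνj⟩ := hcon
    -- a vertex of the part of the face farthest from the plane, chosen away from `W`
    obtain ⟨u1, hu1, A1, hA1, hmin1, he1⟩ := perturb hne hu (Pi.single j (-1))
    simp only [wt_single] at hmin1 he1
    have hge : ∀ R ∈ MinSet (NSupp f) u, R j ≤ A1 j := fun R hR => by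
      have := hmin1 R hR
      have : (R j : ℝ) ≤ A1 j := by linarith
      exact_mod_cast this
    have hmem1 : ∀ R, R ∈ MinSet (NSupp f) u1 ↔ R ∈ MinSet (NSupp f) u ∧ R j = A1 j := fun R => by
      rw [he1]
      refine and_congr Iff.rfl ⟨fun h => ?_, fun h => by rw [h]⟩
      have : (R j : ℝ) = A1 j := by linarith
      exact_mod_cast this
    by_cases hW1 : W ∈ MinSet (NSupp f) u1
    · have e1 := ((hmem1 W).1 hW1).2
      have e2 := hge ν hν
      have hν1 : ν ∈ MinSet (NSupp f) u1 := (hmem1 ν).2 ⟨hν, by omega⟩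
      obtain ⟨u2, hu2, A2, hA2, hmin2, he2⟩ := perturb hne hu1 (fun i => (W i : ℝ) - ν i)
      obtain ⟨u3, hu3, A3, hA3, he3⟩ := exists_vertex hne hu2
      rw [he2] at hA3
      have hA3u := (hmem1 A3).1 hA3.1
      have hne3 : A3 ≠ W := by
        rintro rfl
        have h := hmin2 ν hν1
        rw [← hA3.2, wt_three, wt_three] at h
        have hsq : ((A3 0 : ℝ) - ν 0) ^ 2 + ((A3 1 : ℝ) - ν 1) ^ 2 + ((A3 2 : ℝ) - ν 2) ^ 2 ≤ 0 := by
          nlinarith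
        apply hνW
        have p0 := sq_nonneg ((A3 0 : ℝ) - ν 0)
        have p1 := sq_nonneg ((A3 1 : ℝ) - ν 1)
        have p2 := sq_nonneg ((A3 2 : ℝ) - ν 2)
        have q0 : (A3 0 : ℝ) - ν 0 = 0 := by rw [← sq_eq_zero_iff]; linarith
        have q1 : (A3 1 : ℝ) - ν 1 = 0 := by rw [← sq_eq_zero_iff]; linarith
        have q2 : (A3 2 : ℝ) - ν 2 = 0 := by rw [← sq_eq_zero_iff]; linarith
        ext i
        fin_cases i
        · exact_mod_cast (sub_eq_zero.1 q0).symm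
        · exact_mod_cast (sub_eq_zero.1 q1).symm
        · exact_mod_cast (sub_eq_zero.1 q2).symm
      have := hT A3 hA3u.1 hne3 ⟨u3, hu3, he3⟩
      omega
    · obtain ⟨u3, hu3, A3, hA3, he3⟩ := exists_vertex hne hu1
      have hne3 : A3 ≠ W := fun h => hW1 (h ▸ hA3)
      have h3 := (hmem1 A3).1 hA3
      have := hT A3 h3.1 hne3 ⟨u3, hu3, he3⟩
      have := hge ν hν
      omega
  have hWj' : W j = 1 := by
    obtain ⟨ν, hν, h0⟩ := hj j
    rcases hall ν hν with rfl | h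
    · omega
    · exact absurd h h0
  refine ⟨W, hWm, j, hji, hWj', fun k hki hkj => ?_, hall⟩
  have hpair : ∑ l ∈ ({j, k} : Finset (Fin 3)), (W l) ^ 2 ≤ 1 := by
    rw [← hsum]
    refine Finset.sum_le_sum_of_subset ?_
    intro l hl
    simp only [Finset.mem_insert, Finset.mem_singleton] at hl
    rcases hl with rfl | rfl
    · exact Finset.mem_erase.2 ⟨hji, Finset.mem_univ _⟩
    · exact Finset.mem_erase.2 ⟨hki, Finset.mem_univ _⟩
  rw [Finset.sum_pair hkj.symm, hWj'] at hpair
  have : (W k) ^ 2 = 0 := by omega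
  simpa using this

/-! ### Exceptional faces yield an edge of the family `𝒥` -/

/-- The support as a ternary relation on exponents. -/
def supp3 (f : (Fin 3 → ℂ) → ℂ) (a b c : ℕ) : Prop := ![a, b, c] ∈ NSupp f

lemma vec3_eta {α : Type*} (ν : Fin 3 → α) : ![ν 0, ν 1, ν 2] = ν := by
  ext i; fin_cases i <;> rfl

lemma toSet_supp3 (f : (Fin 3 → ℂ) → ℂ) : toSet (supp3 f) = NSupp f := by
  ext ν
  change ![ν 0, ν 1, ν 2] ∈ NSupp f ↔ ν ∈ NSupp f
  rw [vec3_eta]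

lemma mem_minSet_iff {f : (Fin 3 → ℂ) → ℂ} {u : Fin 3 → ℝ} {ν : Fin 3 → ℕ} :
    ν ∈ MinSet (NSupp f) u ↔ Mn (supp3 f) (u 0) (u 1) (u 2) (ν 0) (ν 1) (ν 2) := by
  rw [← toSet_supp3, mem_minSet_toSet]

/-- If all 2-dimensional faces are exceptional then every minimal set with three linearly
independent members is exceptional in the combinatorial sense. -/
lemma exc_of_gamma {f : (Fin 3 → ℂ) → ℂ} (hne : (NSupp f).Nonempty)
    (h : GammaK f 2 = ∅ ∨ (GammaK f 2 = Ef f ∧ (GammaK f 2).Nonempty))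
    {x y z : ℝ} (hx : 0 < x) (hy : 0 < y) (hz : 0 < z) {a b c a' b' c' a'' b'' c'' : ℕ}
    (hA : Mn (supp3 f) x y z a b c) (hB : Mn (supp3 f) x y z a' b' c')
    (hC : Mn (supp3 f) x y z a'' b'' c'')
    (hd : det3 a b c a' b' c' a'' b'' c'' ≠ 0) : Exc (supp3 f) x y z := by
  have hu : ∀ i, 0 < ![x, y, z] i := by
    intro i; fin_cases i
    exacts [hx, hy, hz]
  have hA' : ![a, b, c] ∈ MinSet (NSupp f) ![x, y, z] := mem_minSet_iff.2 hA
  have hB' : ![a', b', c'] ∈ MinSet (NSupp f) ![x, y, z] := mem_minSet_iff.2 hB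
  have hC' : ![a'', b'', c''] ∈ MinSet (NSupp f) ![x, y, z] := mem_minSet_iff.2 hC
  have hdim : faceDim (faceOf ![x, y, z] (NDiag f)) = 2 := by
    rw [faceOf_eq hne hu, faceDim_convexHull]
    exact finrank_eq_two hu hA' hB' hC' hd
  have hmem : faceOf ![x, y, z] (NDiag f) ∈ GammaK f 2 := ⟨⟨_, hu, rfl⟩, hdim⟩
  have hE : faceOf ![x, y, z] (NDiag f) ∈ Ef f := by
    rcases h with h | h
    · rw [h] at hmem; exact hmem.elim
    · rw [← h.1]; exact hmem
  obtain ⟨-, i, hi⟩ := hE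
  have hj : ∀ j, ∃ ν ∈ MinSet (NSupp f) ![x, y, z], ν j ≠ 0 := by
    intro j
    by_contra hcon
    push Not at hcon
    have e1 := hcon _ hA'
    have e2 := hcon _ hB'
    have e3 := hcon _ hC'
    apply hd
    fin_cases j
    · replace e1 : a = 0 := e1
      replace e2 : a' = 0 := e2
      replace e3 : a'' = 0 := e3
      subst e1 e2 e3
      unfold det3; push_cast; ring
    · replace e1 : b = 0 := e1
      replace e2 : b' = 0 := e2
      replace e3 : b'' = 0 := e3
      subst e1 e2 e3
      unfold det3; push_cast; ring
    · replace e1 : c = 0 := e1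
      replace e2 : c' = 0 := e2
      replace e3 : c'' = 0 := e3
      subst e1 e2 e3
      unfold det3; push_cast; ring
  obtain ⟨W, hW, j, hji, hWj, hk, hall⟩ := exc_data hne hu hj hi
  refine ⟨W 0, W 1, W 2, mem_minSet_iff.1 hW, ?_⟩
  have hall' : ∀ p q r, Mn (supp3 f) x y z p q r →
      (p = W 0 ∧ q = W 1 ∧ r = W 2) ∨ (![p, q, r] : Fin 3 → ℕ) j = 0 := by
    intro p q r hm
    rcases hall ![p, q, r] (mem_minSet_iff.2 hm) with h | h
    · left; rw [← h]; exact ⟨rfl, rfl, rfl⟩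
    · exact Or.inr h
  have k0 := hk 0
  have k1 := hk 1
  have k2 := hk 2
  fin_cases j
  · refine Or.inl ⟨hWj, ?_, hall'⟩
    fin_cases i
    · exact absurd rfl hji
    · exact Or.inr (k2 (by decide) (by decide))
    · exact Or.inl (k1 (by decide) (by decide))
  · refine Or.inr (Or.inl ⟨hWj, ?_, hall'⟩)
    fin_cases i
    · exact Or.inr (k2 (by decide) (by decide))
    · exact absurd rfl hji
    · exact Or.inl (k0 (by decide) (by decide))
  · refine Or.inr (Or.inr ⟨hWj, ?_, hall'⟩)
    fin_cases i
    · exact Or.inr (k1 (by decide) (by decide))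
    · exact Or.inl (k0 (by decide) (by decide))
    · exact absurd rfl hji

/-- A weight with exactly two minimal exponents defines the segment joining them. -/
lemma segment_face {f : (Fin 3 → ℂ) → ℂ} (hne : (NSupp f).Nonempty) {u : Fin 3 → ℝ}
    (hu : ∀ i, 0 < u i) {A B : Fin 3 → ℕ} (hAB : A ≠ B) (hm : MinSet (NSupp f) u = {A, B}) :
    segment ℝ (pt A) (pt B) ∈ GammaK f 1 := by
  have he : faceOf u (NDiag f) = segment ℝ (pt A) (pt B) := by
    rw [faceOf_eq hne hu, hm, Set.image_pair, convexHull_pair]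
  refine ⟨⟨u, hu, he.symm⟩, ?_⟩
  rw [← convexHull_pair, faceDim_convexHull]
  apply le_antisymm
  · refine finrank_vectorSpan_le_one (pt A - pt B) ?_
    rintro x (rfl | rfl) y (rfl | rfl)
    exacts [⟨0, by simp⟩, ⟨1, by simp⟩, ⟨-1, by simp⟩, ⟨0, by simp⟩]
  · by_contra hcon
    exact hAB (pt_injective (eq_of_finrank_vectorSpan_eq_zero (s := {pt A, pt B}) (by omega)
      (Or.inl rfl) (Or.inr rfl)))

lemma exists_segJ_of_concl {f : (Fin 3 → ℂ) → ℂ} (hne : (NSupp f).Nonempty)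
    (h : Concl (supp3 f)) : ∃ I ∈ GammaK f 1, InJ I := by
  obtain ⟨m, hm, x, y, z, hx, hy, hz, h⟩ := h
  have hu : ∀ i, 0 < ![x, y, z] i := by
    intro i; fin_cases i
    exacts [hx, hy, hz]
  have key : ∀ A B : Fin 3 → ℕ, A ≠ B →
      (∀ a b c, Mn (supp3 f) x y z a b c ↔ (a = A 0 ∧ b = A 1 ∧ c = A 2) ∨
        (a = B 0 ∧ b = B 1 ∧ c = B 2)) → segment ℝ (pt A) (pt B) ∈ GammaK f 1 := by
    intro A B hAB hAll
    refine segment_face hne hu hAB ?_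
    ext ν
    have e : ∀ C : Fin 3 → ℕ, ν = C ↔ ν 0 = C 0 ∧ ν 1 = C 1 ∧ ν 2 = C 2 := fun C =>
      ⟨fun h => h ▸ ⟨rfl, rfl, rfl⟩, fun ⟨h0, h1, h2⟩ => by
        ext i; fin_cases i
        exacts [h0, h1, h2]⟩
    rw [mem_minSet_iff, Set.mem_insert_iff, Set.mem_singleton_iff, e, e]
    exact hAll _ _ _
  have e : ∀ a b c : ℕ, pt ![a, b, c] = ![(a : ℝ), b, c] := fun a b c => by
    ext i; fin_cases i <;> rfl
  rcases h with h | h | h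
  · refine ⟨_, key ![0, 1, 1] ![m, 0, 0] (fun h => by simpa using congrFun h 1) h, m, hm, ?_⟩
    left; rw [e, e]; push_cast; rfl
  · refine ⟨_, key ![1, 0, 1] ![0, m, 0] (fun h => by simpa using congrFun h 0) h, m, hm, ?_⟩
    right; left; rw [e, e]; push_cast; rfl
  · refine ⟨_, key ![1, 1, 0] ![0, 0, m] (fun h => by simpa using congrFun h 0) h, m, hm, ?_⟩
    right; right; rw [e, e]; push_cast; rfl

/-! ### An edge of the family `𝒥` makes all faces exceptional -/

lemma fin3_cases {i j k : Fin 3} (hij : i ≠ j) (hik : i ≠ k) (hjk : j ≠ k) (l : Fin 3) :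
    l = i ∨ l = j ∨ l = k := by
  revert i j k l; decide

lemma wt_perm {i j k : Fin 3} (hij : i ≠ j) (hik : i ≠ k) (hjk : j ≠ k) (u : Fin 3 → ℝ)
    (ν : Fin 3 → ℕ) : wt u ν = u i * ν i + u j * ν j + u k * ν k := by
  have h : (Finset.univ : Finset (Fin 3)) = {i, j, k} := by
    revert i j k; decide
  unfold wt
  rw [h, Finset.sum_insert (by simp [hij, hik]), Finset.sum_pair hjk, add_assoc]

lemma ext_perm {α : Type*} {i j k : Fin 3} (hij : i ≠ j) (hik : i ≠ k) (hjk : j ≠ k)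
    {x y : Fin 3 → α} (h1 : x i = y i) (h2 : x j = y j) (h3 : x k = y k) : x = y := by
  ext l
  rcases fin3_cases hij hik hjk l with rfl | rfl | rfl <;> assumption

/-- Minimal exponents in a coordinate plane lie on a line. -/
lemma finrank_plane {V : Set (Fin 3 → ℕ)} {u : Fin 3 → ℝ} (hu : ∀ i, 0 < u i) {i j k : Fin 3}
    (hij : i ≠ j) (hik : i ≠ k) (hjk : j ≠ k) {M : Set (Fin 3 → ℕ)} (hM : M ⊆ MinSet V u)
    (hk : ∀ ν ∈ M, ν k = 0) : Module.finrank ℝ (vectorSpan ℝ (pt '' M)) ≤ 1 := by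
  refine finrank_vectorSpan_le_one (Pi.single i (u j) - Pi.single j (u i)) ?_
  rintro _ ⟨x, hx, rfl⟩ _ ⟨y, hy, rfl⟩
  have e : wt u x = wt u y := le_antisymm ((hM hx).2 _ (hM hy).1) ((hM hy).2 _ (hM hx).1)
  rw [wt_perm hij hik hjk, wt_perm hij hik hjk, hk x hx, hk y hy] at e
  have h0 := (hu j).ne'
  refine ⟨((x i : ℝ) - y i) / u j, ext_perm hij hik hjk ?_ ?_ ?_⟩
  · simp [pt, hij]; field_simp
  · simp [pt, hij.symm]; field_simp; linarith
  · simp [pt, hik.symm, hjk.symm, hk x hx, hk y hy]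

/-- If all minimal exponents except `W = e_j + e_k` lie in the plane `x_k = 0`, then the face is
exceptional with respect to the axis `OX_j`. -/
lemma exc_of_plane {f : (Fin 3 → ℂ) → ℂ} (hne : (NSupp f).Nonempty) {u : Fin 3 → ℝ}
    (hu : ∀ i, 0 < u i) {i j k : Fin 3} (hij : i ≠ j) (hik : i ≠ k) (hjk : j ≠ k)
    {W : Fin 3 → ℕ} (hWi : W i = 0) (hWk : W k = 1)
    (hall : ∀ ν ∈ MinSet (NSupp f) u, ν = W ∨ ν k = 0)
    (hdim : faceDim (faceOf u (NDiag f)) = 2) : ExcWrt f j (faceOf u (NDiag f)) := by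
  rw [faceOf_eq hne hu, faceDim_convexHull] at hdim
  have hW : W ∈ MinSet (NSupp f) u := by
    by_contra hcon
    have := finrank_plane hu hij hik hjk (M := MinSet (NSupp f) u) subset_rfl
      (fun ν hν => (hall ν hν).resolve_left (fun h => hcon (h ▸ hν)))
    omega
  -- the minimal exponents are not contained in a two-element set containing `W`
  have htwo : ∀ A : Fin 3 → ℕ, ∃ ν ∈ MinSet (NSupp f) u, ν ≠ W ∧ ν ≠ A := by
    intro A
    by_contra hcon
    push Not at hcon
    have : Module.finrank ℝ (vectorSpan ℝ (pt '' MinSet (NSupp f) u)) ≤ 1 := by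
      refine finrank_vectorSpan_le_one (pt W - pt A) ?_
      rintro _ ⟨x, hx, rfl⟩ _ ⟨y, hy, rfl⟩
      rcases eq_or_ne x W with rfl | h1
      · rcases eq_or_ne y x with rfl | h2
        · exact ⟨0, by simp⟩
        · rw [hcon y hy h2]; exact ⟨1, by simp⟩
      · rw [hcon x hx h1]
        rcases eq_or_ne y W with rfl | h2
        · exact ⟨-1, by simp⟩
        · rw [hcon y hy h2]; exact ⟨0, by simp⟩
    omega
  obtain ⟨u1, hu1, A1, hA1, hmin1, he1⟩ := perturb hne hu (Pi.single k (-1))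
  obtain ⟨u2, hu2, A2, hA2, hmin2, he2⟩ := perturb hne hu (Pi.single k 1)
  simp only [wt_single] at hmin1 he1 hmin2 he2
  have hA1W : A1 = W := by
    refine (hall A1 hA1).resolve_right fun h => ?_
    have := hmin1 W hW
    rw [h, hWk] at this
    norm_num at this
  have hM1 : MinSet (NSupp f) u1 = {W} := by
    rw [he1, hA1W]
    ext ν
    simp only [Set.mem_ofPred_eq, Set.mem_singleton_iff]
    refine ⟨fun ⟨h1, h2⟩ => (hall ν h1).resolve_right fun h => ?_,
      fun h => by rw [h]; exact ⟨hW, rfl⟩⟩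
    rw [h, hWk] at h2
    norm_num at h2
  have hA2k : A2 k = 0 := by
    obtain ⟨ν, hν, hνW, -⟩ := htwo W
    have h1 := (hall ν hν).resolve_left hνW
    have h2 := hmin2 ν hν
    rw [h1] at h2
    have : (A2 k : ℝ) ≤ 0 := by push_cast at h2; linarith
    exact_mod_cast le_antisymm this (Nat.cast_nonneg _)
  have hM2 : ∀ ν, ν ∈ MinSet (NSupp f) u2 ↔ ν ∈ MinSet (NSupp f) u ∧ ν ≠ W := by
    intro ν
    rw [he2, hA2k]
    refine ⟨fun ⟨h1, h2⟩ => ⟨h1, fun h => ?_⟩, fun ⟨h1, h2⟩ => ⟨h1, ?_⟩⟩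
    · rw [h, hWk] at h2; norm_num at h2
    · rw [(hall ν h1).resolve_left h2]
  have hk2 : ∀ ν ∈ MinSet (NSupp f) u2, ν k = 0 := fun ν hν =>
    (hall ν ((hM2 ν).1 hν).1).resolve_left ((hM2 ν).1 hν).2
  have hWv : pt W ∈ vtxOf f (faceOf u (NDiag f)) :=
    (mem_vtxOf hne hu).2 ⟨W, hW, rfl, u1, hu1, hM1⟩
  refine ⟨pt W, hWv, ?_, faceOf u2 (NDiag f), ⟨⟨u2, hu2, rfl⟩, ?_⟩, ⟨k, hjk.symm, ?_⟩, ?_⟩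
  · have h : (Finset.univ.erase j : Finset (Fin 3)) = {i, k} := by
      clear * - hij hik hjk
      revert i j k; decide
    unfold distAxis
    rw [h, Finset.sum_pair hik]
    simp [pt, hWi, hWk]
  · rw [faceOf_eq hne hu2, faceDim_convexHull]
    apply le_antisymm (finrank_plane hu2 hij hik hjk subset_rfl hk2)
    by_contra hcon
    obtain ⟨ν, hν, hνW, hνA⟩ := htwo A2
    obtain ⟨A3, hA3⟩ := minSet_nonempty hne hu2
    have hA2m : A2 ∈ MinSet (NSupp f) u2 := (hM2 A2).2 ⟨hA2, fun h => by
      rw [h, hWk] at hA2k; omega⟩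
    exact hνA (pt_injective (eq_of_finrank_vectorSpan_eq_zero (by omega)
      (Set.mem_image_of_mem pt ((hM2 ν).2 ⟨hν, hνW⟩)) (Set.mem_image_of_mem pt hA2m)))
  · rw [faceOf_eq hne hu2]
    refine convexHull_min ?_ ?_
    · rintro _ ⟨ν, hν, rfl⟩
      simp [pt, hk2 ν hν]
    · intro x hx y hy a b _ _ _
      simp only [Set.mem_ofPred_eq, Pi.add_apply, Pi.smul_apply, smul_eq_mul] at *
      rw [hx, hy]; ring
  · ext P
    rw [mem_vtxOf hne hu2, Set.mem_sdiff, mem_vtxOf hne hu]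
    constructor
    · rintro ⟨ν, hν, rfl, hu'⟩
      exact ⟨⟨ν, ((hM2 ν).1 hν).1, rfl, hu'⟩, fun h => ((hM2 ν).1 hν).2 (pt_injective h)⟩
    · rintro ⟨⟨ν, hν, rfl, hu'⟩, hP⟩
      exact ⟨ν, (hM2 ν).2 ⟨hν, fun h => hP (by rw [h]; rfl)⟩, rfl, hu'⟩

/-- If the segment joining `e_j + e_k` to `m e_i` is a face then all 2-dimensional faces are
exceptional: such a face has, besides possibly `e_j + e_k`, only points in the planes `x_j = 0` and
`x_k = 0`, and it cannot have points in both off the axis, because comparing two such points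
with the ends of the segment gives opposite inequalities for the two weights. -/
lemma mem_Ef_of_edge {f : (Fin 3 → ℂ) → ℂ} (hne : (NSupp f).Nonempty) {u0 : Fin 3 → ℝ}
    (hu0 : ∀ i, 0 < u0 i) {i j k : Fin 3} (hij : i ≠ j) (hik : i ≠ k) (hjk : j ≠ k)
    {W B : Fin 3 → ℕ} (hWi : W i = 0) (hWj : W j = 1) (hWk : W k = 1) (hBj : B j = 0)
    (hBk : B k = 0) (hBi : 0 < B i) (h0 : MinSet (NSupp f) u0 = {W, B}) {S : Set (Fin 3 → ℝ)}
    (hS : S ∈ GammaK f 2) : S ∈ Ef f := by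
  obtain ⟨⟨u, hu, rfl⟩, hdim⟩ := hS
  have hW0 : W ∈ MinSet (NSupp f) u0 := by rw [h0]; exact Or.inl rfl
  have hB0 : B ∈ MinSet (NSupp f) u0 := by rw [h0]; exact Or.inr rfl
  have hor : ∀ ν ∈ MinSet (NSupp f) u, ν = W ∨ ν j = 0 ∨ ν k = 0 := by
    intro ν hν
    by_contra hcon
    push Not at hcon
    obtain ⟨c1, c2, c3⟩ := hcon
    have hle := hν.2 W hW0.1
    rw [wt_perm hij hik hjk, wt_perm hij hik hjk, hWi, hWj, hWk] at hle
    have d2 : (1 : ℝ) ≤ ν j := by exact_mod_cast Nat.pos_of_ne_zero c2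
    have d3 : (1 : ℝ) ≤ ν k := by exact_mod_cast Nat.pos_of_ne_zero c3
    have d1 : (0 : ℝ) ≤ ν i := Nat.cast_nonneg _
    have p1 := mul_nonneg (hu i).le d1
    have p2 := mul_nonneg (hu j).le (sub_nonneg.2 d2)
    have p3 := mul_nonneg (hu k).le (sub_nonneg.2 d3)
    push_cast at hle
    have q1 : u i * (ν i : ℝ) = 0 := by linarith
    have q2 : u j * ((ν j : ℝ) - 1) = 0 := by linarith
    have q3 : u k * ((ν k : ℝ) - 1) = 0 := by linarith
    have r1 := (mul_eq_zero.1 q1).resolve_left (hu i).ne'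
    have r2 := (mul_eq_zero.1 q2).resolve_left (hu j).ne'
    have r3 := (mul_eq_zero.1 q3).resolve_left (hu k).ne'
    apply c1
    refine ext_perm hij hik hjk ?_ ?_ ?_
    · rw [hWi]; exact_mod_cast r1
    · rw [hWj]; exact_mod_cast sub_eq_zero.1 r2
    · rw [hWk]; exact_mod_cast sub_eq_zero.1 r3
  have hnot : ∀ A ∈ MinSet (NSupp f) u, ∀ A' ∈ MinSet (NSupp f) u,
      A k = 0 → A j ≠ 0 → A' j = 0 → A' k ≠ 0 → False := by
    intro A hA A' hA' hAk hAj hA'j hA'k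
    have n1 : A ∉ MinSet (NSupp f) u0 := by
      rw [h0]; rintro (rfl | rfl)
      · omega
      · omega
    have eAA := le_antisymm (hA.2 A' hA'.1) (hA'.2 A hA.1)
    have lW := hA.2 W hW0.1
    have lB := hA.2 B hB0.1
    have e0 := le_antisymm (hW0.2 B hB0.1) (hB0.2 W hW0.1)
    have l0 : wt u0 W < wt u0 A := lt_of_not_ge fun h =>
      n1 ⟨hA.1, fun μ hμ => h.trans (hW0.2 μ hμ)⟩
    have l0' := hW0.2 A' hA'.1
    rw [wt_perm hij hik hjk, wt_perm hij hik hjk] at eAA lW lB e0 l0 l0'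
    simp only [hWi, hWj, hWk, hBj, hBk, hAk, hA'j, Nat.cast_zero, Nat.cast_one, mul_zero, mul_one,
      zero_add, add_zero] at eAA lW lB e0 l0 l0'
    have hq : (0 : ℝ) < A j := by exact_mod_cast Nat.pos_of_ne_zero hAj
    have hr : (0 : ℝ) < A' k := by exact_mod_cast Nat.pos_of_ne_zero hA'k
    have hm : (0 : ℝ) < B i := by exact_mod_cast hBi
    have hp : (0 : ℝ) ≤ A i := Nat.cast_nonneg _
    have hp' : (0 : ℝ) ≤ A' i := Nat.cast_nonneg _
    generalize (A j : ℝ) = q at *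
    generalize (A' k : ℝ) = r at *
    generalize (B i : ℝ) = m at *
    generalize (A i : ℝ) = p at *
    generalize (A' i : ℝ) = p' at *
    have ha := hu i
    have hb := hu j
    have ha0 := hu0 i
    generalize u i = a at *
    generalize u j = b at *
    generalize u k = c at *
    generalize u0 i = a0 at *
    generalize u0 j = b0 at *
    generalize u0 k = c0 at *
    have hl : 0 < a * p + b * q := by positivity
    -- the two weights give opposite inequalities between these integers
    have k1 : r * p + q * p' + q * r * m ≤ (q + r) * m := by
      refine le_of_mul_le_mul_left ?_ hl
      have s1 := mul_le_mul_of_nonneg_left lW (show 0 ≤ q * r * m by positivity)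
      have s2 := mul_le_mul_of_nonneg_left lB (show 0 ≤ r * p + q * p' by positivity)
      have s3 : (a * p + b * q) * ((q + r) * m) = m * (r * (a * p + b * q) + q * (a * p' + c * r)) := by
        rw [← eAA]; ring
      rw [s3]
      nlinarith
    have k2 : (q + r) * m < r * p + q * p' + q * r * m := by
      refine lt_of_mul_lt_mul_left ?_ ha0.le
      have s1 := mul_lt_mul_of_pos_left l0 hr
      have s2 := mul_le_mul_of_nonneg_left l0' hq.le
      have s3 : q * r * (b0 + c0) = q * r * (a0 * m) := by rw [e0]
      have s4 : (q + r) * (b0 + c0) = (q + r) * (a0 * m) := by rw [e0]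
      nlinarith
    exact absurd k1 (not_le.2 k2)
  have hmem : faceOf u (NDiag f) ∈ GammaK f 2 := ⟨⟨u, hu, rfl⟩, hdim⟩
  by_cases hk : ∀ ν ∈ MinSet (NSupp f) u, ν = W ∨ ν k = 0
  · exact ⟨hmem, j, exc_of_plane hne hu hij hik hjk hWi hWk hk hdim⟩
  · push Not at hk
    obtain ⟨A', hA', hA'W, hA'k⟩ := hk
    have hA'j : A' j = 0 := ((hor A' hA').resolve_left hA'W).resolve_right hA'k
    refine ⟨hmem, k, exc_of_plane hne hu hik hij hjk.symm hWi hWj (fun ν hν => ?_) hdim⟩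
    by_contra hcon
    push Not at hcon
    have hνk := ((hor ν hν).resolve_left hcon.1).resolve_left hcon.2
    exact hnot ν hν A' hA' hνk hcon.2 hA'j hA'k

/-- The only lattice points on a segment of the family `𝒥` are its end points, so that these are
the minimal exponents of a weight defining it. -/
lemma minSet_of_segment {f : (Fin 3 → ℂ) → ℂ} (hne : (NSupp f).Nonempty) {u : Fin 3 → ℝ}
    (hu : ∀ i, 0 < u i) {i j k : Fin 3} (hij : i ≠ j) (hik : i ≠ k) (hjk : j ≠ k)
    {W B : Fin 3 → ℕ} (hWi : W i = 0) (hWj : W j = 1) (hWk : W k = 1) (hBj : B j = 0)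
    (hBk : B k = 0) (h : segment ℝ (pt W) (pt B) = faceOf u (NDiag f)) :
    MinSet (NSupp f) u = {W, B} := by
  have hsub : ∀ ν ∈ MinSet (NSupp f) u, ν = W ∨ ν = B := by
    intro ν hν
    have hm : pt ν ∈ segment ℝ (pt W) (pt B) := by
      rw [h]; exact (pt_mem_faceOf hu hν.1).2 hν
    obtain ⟨s, t, hs, ht, hst, he⟩ := hm
    have ei := congrFun he i
    have ej := congrFun he j
    have ek := congrFun he k
    simp only [pt, Pi.add_apply, Pi.smul_apply, smul_eq_mul, hWi, hWj, hWk, hBj, hBk, Nat.cast_zero,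
      Nat.cast_one, mul_zero, mul_one, zero_add, add_zero] at ei ej ek
    have hj1 : (ν j : ℝ) ≤ 1 := by linarith
    have hj1' : ν j ≤ 1 := by exact_mod_cast hj1
    have hjk' : (ν k : ℝ) = ν j := by linarith
    have hjk'' : ν k = ν j := by exact_mod_cast hjk'
    rcases Nat.le_one_iff_eq_zero_or_eq_one.1 hj1' with h0 | h1
    · right
      have : s = 0 := by rw [ej, h0]; simp
      have ht1 : t = 1 := by linarith
      rw [ht1, one_mul] at ei
      have ei' : B i = ν i := by exact_mod_cast ei
      exact ext_perm hij hik hjk ei'.symm (by omega) (by omega)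
    · left
      have : s = 1 := by rw [ej, h1]; simp
      have ht1 : t = 0 := by linarith
      rw [ht1, zero_mul] at ei
      have ei' : 0 = ν i := by exact_mod_cast ei
      exact ext_perm hij hik hjk (by omega) (by omega) (by omega)
  have hWB : W ≠ B := fun h => by rw [h] at hWj; omega
  have key : ∀ C D : Fin 3 → ℕ, C ≠ D → (∀ ν ∈ MinSet (NSupp f) u, ν = C ∨ ν = D) →
      pt C ∈ faceOf u (NDiag f) → C ∈ MinSet (NSupp f) u := by
    intro C D hCD hs hC
    by_contra hcon
    have hsing : pt '' MinSet (NSupp f) u ⊆ {pt D} := by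
      rintro _ ⟨ν, hν, rfl⟩
      rw [(hs ν hν).resolve_left fun h => hcon (h ▸ hν)]
      rfl
    rw [faceOf_eq hne hu] at hC
    have := convexHull_mono hsing hC
    rw [convexHull_singleton] at this
    exact hCD (pt_injective this)
  have hW := key W B hWB hsub (h ▸ left_mem_segment ℝ _ _)
  have hB := key B W hWB.symm (fun ν hν => (hsub ν hν).symm) (h ▸ right_mem_segment ℝ _ _)
  ext ν
  refine ⟨hsub ν, ?_⟩
  rintro (rfl | rfl)
  exacts [hW, hB]

lemma gamma_of_exists_segJ {f : (Fin 3 → ℂ) → ℂ} (hne : (NSupp f).Nonempty)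
    (h : ∃ I ∈ GammaK f 1, InJ I) :
    GammaK f 2 = ∅ ∨ (GammaK f 2 = Ef f ∧ (GammaK f 2).Nonempty) := by
  have hall : ∀ S ∈ GammaK f 2, S ∈ Ef f := by
    obtain ⟨I, ⟨⟨u, hu, he⟩, -⟩, m, hm, hI⟩ := h
    have e : ∀ a b c : ℕ, pt ![a, b, c] = ![(a : ℝ), b, c] := fun a b c => by
      ext i; fin_cases i <;> rfl
    have e1 := e 0 1 1
    have e2 := e 1 0 1
    have e3 := e 1 1 0
    have f1 := e m 0 0
    have f2 := e 0 m 0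
    have f3 := e 0 0 m
    push_cast at e1 e2 e3 f1 f2 f3
    intro S hS
    rcases hI with hI | hI | hI
    · rw [← e1, ← f1] at hI
      have h0 := minSet_of_segment hne hu (i := 0) (j := 1) (k := 2) (by decide) (by decide)
        (by decide) rfl rfl rfl rfl rfl (hI.symm.trans he)
      exact mem_Ef_of_edge hne hu (i := 0) (j := 1) (k := 2) (by decide) (by decide)
        (by decide) rfl rfl rfl rfl rfl (show 0 < m by omega) h0 hS
    · rw [← e2, ← f2] at hI
      have h0 := minSet_of_segment hne hu (i := 1) (j := 0) (k := 2) (by decide) (by decide)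
        (by decide) rfl rfl rfl rfl rfl (hI.symm.trans he)
      exact mem_Ef_of_edge hne hu (i := 1) (j := 0) (k := 2) (by decide) (by decide)
        (by decide) rfl rfl rfl rfl rfl (show 0 < m by omega) h0 hS
    · rw [← e3, ← f3] at hI
      have h0 := minSet_of_segment hne hu (i := 2) (j := 0) (k := 1) (by decide) (by decide)
        (by decide) rfl rfl rfl rfl rfl (hI.symm.trans he)
      exact mem_Ef_of_edge hne hu (i := 2) (j := 0) (k := 1) (by decide) (by decide)
        (by decide) rfl rfl rfl rfl rfl (show 0 < m by omega) h0 hS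
  rcases (GammaK f 2).eq_empty_or_nonempty with h0 | h0
  · exact Or.inl h0
  · exact Or.inr ⟨Set.Subset.antisymm hall fun S hS => hS.1, h0⟩

/-! ### Supports of isolated singularities -/

section Analytic

variable {U : Set (Fin 3 → ℂ)} {g h : (Fin 3 → ℂ) → ℂ}

lemma pder_analytic (i : Fin 3) (hg : AnalyticOnNhd ℂ g U) : AnalyticOnNhd ℂ (pder i g) U :=
  (ContinuousLinearMap.apply ℂ ℂ (Pi.single i 1 : Fin 3 → ℂ)).comp_analyticOnNhd hg.fderiv

lemma iter_pder_analytic (i : Fin 3) (n : ℕ) (hg : AnalyticOnNhd ℂ g U) :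
    AnalyticOnNhd ℂ ((pder i)^[n] g) U := by
  induction n with
  | zero => exact hg
  | succ n ih => rw [Function.iterate_succ_apply']; exact pder_analytic i ih

lemma pder_congr (hU : IsOpen U) (i : Fin 3) (hgh : Set.EqOn g h U) :
    Set.EqOn (pder i g) (pder i h) U := fun z hz => by
  unfold pder
  rw [(hgh.eventuallyEq_of_mem (hU.mem_nhds hz)).fderiv_eq]

lemma iter_pder_congr (hU : IsOpen U) (i : Fin 3) (n : ℕ) (hgh : Set.EqOn g h U) :
    Set.EqOn ((pder i)^[n] g) ((pder i)^[n] h) U := by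
  induction n with
  | zero => exact hgh
  | succ n ih =>
    rw [Function.iterate_succ_apply', Function.iterate_succ_apply']
    exact pder_congr hU i ih

lemma pder_comm (i j : Fin 3) (hg : AnalyticOnNhd ℂ g U) :
    Set.EqOn (pder i (pder j g)) (pder j (pder i g)) U := fun z hz => by
  have hd : DifferentiableAt ℂ (fderiv ℂ g) z := (hg.fderiv z hz).differentiableAt
  have key : ∀ a b : Fin 3, pder a (pder b g) z
      = fderiv ℂ (fderiv ℂ g) z (Pi.single a 1) (Pi.single b 1) := by
    intro a b
    unfold pder
    rw [fderiv_clm_apply hd (differentiableAt_const _)]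
    simp
  rw [key, key]
  refine (ContDiffAt.isSymmSndFDerivAt (n := 2) (hg z hz).contDiffAt ?_).eq _ _
  simp

lemma iter_pder_comm (hU : IsOpen U) (i j : Fin 3) (n : ℕ) (hg : AnalyticOnNhd ℂ g U) :
    Set.EqOn ((pder i)^[n] (pder j g)) (pder j ((pder i)^[n] g)) U := by
  induction n with
  | zero => exact fun _ _ => rfl
  | succ n ih =>
    rw [Function.iterate_succ_apply', Function.iterate_succ_apply']
    exact (pder_congr hU i ih).trans (pder_comm i j (iter_pder_analytic i n hg))

lemma mder_three (ν : Fin 3 → ℕ) (g : (Fin 3 → ℂ) → ℂ) :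
    mder ν g = (pder 0)^[ν 0] ((pder 1)^[ν 1] ((pder 2)^[ν 2] g)) := rfl

lemma mder_pder (hU : IsOpen U) (ν : Fin 3 → ℕ) (k : Fin 3) (hg : AnalyticOnNhd ℂ g U) :
    Set.EqOn (mder ν (pder k g)) (mder (ν + Pi.single k 1) g) U := by
  rw [mder_three, mder_three]
  have h2 := iter_pder_analytic 2 (ν 2) hg
  have h1 := iter_pder_analytic 1 (ν 1) h2
  fin_cases k
  · have e1 : Set.EqOn ((pder 1)^[ν 1] ((pder 2)^[ν 2] (pder 0 g)))
        (pder 0 ((pder 1)^[ν 1] ((pder 2)^[ν 2] g))) U :=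
      (iter_pder_congr hU 1 (ν 1) (iter_pder_comm hU 2 0 (ν 2) hg)).trans
        (iter_pder_comm hU 1 0 (ν 1) h2)
    exact iter_pder_congr hU 0 (ν 0) e1
  · exact iter_pder_congr hU 0 (ν 0)
      (iter_pder_congr hU 1 (ν 1) (iter_pder_comm hU 2 1 (ν 2) hg))
  · exact fun _ _ => rfl

lemma mder_iter_pder (hU : IsOpen U) (ν : Fin 3 → ℕ) (k : Fin 3) (n : ℕ)
    (hg : AnalyticOnNhd ℂ g U) :
    Set.EqOn (mder ν ((pder k)^[n] g)) (mder (ν + Pi.single k n) g) U := by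
  induction n generalizing g with
  | zero => simp [Set.EqOn]
  | succ n ih =>
    have e : ν + Pi.single k (n + 1) = ν + Pi.single k n + Pi.single k 1 := by
      rw [add_assoc, ← Pi.single_add]
    rw [Function.iterate_succ_apply, e]
    exact (ih (pder_analytic k hg)).trans (mder_pder hU _ k hg)

lemma mder_single (i : Fin 3) (n : ℕ) (g : (Fin 3 → ℂ) → ℂ) :
    mder (Pi.single i n) g = (pder i)^[n] g := by
  rw [mder_three]
  fin_cases i <;> rfl

lemma add_single_mem_ball {r : ℝ} {w : Fin 3 → ℂ} (hw : w ∈ Metric.ball 0 r) {i : Fin 3}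
    (hi : w i = 0) {t : ℂ} (ht : ‖t‖ < r) : w + Pi.single i t ∈ Metric.ball 0 r := by
  rw [mem_ball_zero_iff] at hw ⊢
  have hr : 0 < r := (norm_nonneg _).trans_lt ht
  rw [pi_norm_lt_iff hr] at hw ⊢
  intro l
  rcases eq_or_ne l i with rfl | hl
  · simpa [hi] using ht
  · simpa [hl] using hw l

lemma hasDerivAt_line {z : Fin 3 → ℂ} (hg : DifferentiableAt ℂ g z) {w : Fin 3 → ℂ} {i : Fin 3}
    {t : ℂ} (hz : z = w + Pi.single i t) :
    HasDerivAt (fun s => g (w + Pi.single i s)) (pder i g z) t := by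
  subst hz
  exact hg.hasFDerivAt.comp_hasDerivAt t ((hasDerivAt_single i t).const_add w)

/-- An analytic function on a polydisc whose pure derivatives in one variable all vanish at a point
vanishes along that variable. -/
lemma eq_zero_on_line {r : ℝ} (hg : AnalyticOnNhd ℂ g (Metric.ball 0 r)) {w : Fin 3 → ℂ}
    (hw : w ∈ Metric.ball 0 r) {i : Fin 3} (hi : w i = 0) (h0 : ∀ n, (pder i)^[n] g w = 0)
    {t : ℂ} (ht : ‖t‖ < r) : g (w + Pi.single i t) = 0 := by
  have hit : ∀ n, ∀ s : ℂ, s ∈ Metric.ball 0 r →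
      iteratedDeriv n (fun s => g (w + Pi.single i s)) s = (pder i)^[n] g (w + Pi.single i s) := by
    intro n
    induction n with
    | zero => intro s _; simp
    | succ n ih =>
      intro s hs
      rw [iteratedDeriv_succ, Function.iterate_succ_apply']
      have hE : iteratedDeriv n (fun s => g (w + Pi.single i s)) =ᶠ[𝓝 s]
          fun s => (pder i)^[n] g (w + Pi.single i s) :=
        Filter.eventuallyEq_of_mem (Metric.isOpen_ball.mem_nhds hs) ih
      rw [hE.deriv_eq]
      exact (hasDerivAt_line (iter_pder_analytic i n hg _ (add_single_mem_ball hw hi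
        (mem_ball_zero_iff.1 hs))).differentiableAt rfl).deriv
  have hdiff : DifferentiableOn ℂ (fun s => g (w + Pi.single i s)) (Metric.ball 0 r) :=
    fun s hs => (hasDerivAt_line (hg _ (add_single_mem_ball hw hi
      (mem_ball_zero_iff.1 hs))).differentiableAt rfl).differentiableAt.differentiableWithinAt
  have hr : (0 : ℂ) ∈ Metric.ball (0 : ℂ) r :=
    mem_ball_zero_iff.2 (by simpa using (norm_nonneg _).trans_lt ht)
  rw [← Complex.taylorSeries_eq_on_ball hdiff (mem_ball_zero_iff.2 ht)]
  have : ∀ n, iteratedDeriv n (fun s => g (w + Pi.single i s)) 0 = 0 := fun n => by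
    rw [hit n 0 hr]; simpa using h0 n
  simp [this]

end Analytic

/-- The support of an isolated singularity comes within distance one of each coordinate axis,
since otherwise the gradient vanishes along the axis. -/
lemma exists_near_axis {f : (Fin 3 → ℂ) → ℂ} {r : ℝ} (hr : 0 < r)
    (hf : AnalyticOnNhd ℂ f (Metric.ball 0 r))
    (hiso : ∀ z ∈ Metric.ball (0 : Fin 3 → ℂ) r, z ≠ 0 → ∃ i, pder i f z ≠ 0) (i : Fin 3) :
    ∃ n k, Pi.single i n + Pi.single k 1 ∈ NSupp f := by
  by_contra hcon
  push Not at hcon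
  have h0 : (0 : Fin 3 → ℂ) ∈ Metric.ball 0 r := Metric.mem_ball_self hr
  have ht : ‖((r / 2 : ℝ) : ℂ)‖ < r := by
    rw [Complex.norm_real, Real.norm_of_nonneg (by positivity)]; linarith
  have hzero : ∀ k, pder k f (0 + Pi.single i ((r / 2 : ℝ) : ℂ)) = 0 := by
    intro k
    refine eq_zero_on_line (pder_analytic k hf) h0 rfl (fun n => ?_) ht
    rw [← mder_single, mder_pder Metric.isOpen_ball _ k hf h0]
    exact not_not.1 (hcon n k)
  obtain ⟨k, hk⟩ := hiso _ (add_single_mem_ball (i := i) h0 rfl ht) (fun h => by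
    have h1 := congrFun h i
    simp at h1
    exact hr.ne' h1)
  exact hk (hzero k)

/-- If every exponent of `f` involves `z_j`, then `f` vanishes on the hyperplane `z_j = 0`. -/
lemma eq_zero_on_plane {f : (Fin 3 → ℂ) → ℂ} {r : ℝ} (hr : 0 < r)
    (hf : AnalyticOnNhd ℂ f (Metric.ball 0 r)) {i j k : Fin 3} (hij : i ≠ j) (hik : i ≠ k)
    (hjk : j ≠ k) (h : ∀ ν ∈ NSupp f, ν j ≠ 0) {z : Fin 3 → ℂ} (hz : z ∈ Metric.ball 0 r)
    (hzj : z j = 0) : f z = 0 := by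
  have h0 : (0 : Fin 3 → ℂ) ∈ Metric.ball 0 r := Metric.mem_ball_self hr
  have hzl : ∀ l, ‖z l‖ < r := (pi_norm_lt_iff hr).1 (mem_ball_zero_iff.1 hz)
  have hw : 0 + Pi.single k (z k) ∈ Metric.ball (0 : Fin 3 → ℂ) r :=
    add_single_mem_ball h0 rfl (hzl k)
  have e : z = 0 + Pi.single k (z k) + Pi.single i (z i) := by
    refine ext_perm hij hik hjk ?_ ?_ ?_
    · simp [hik]
    · simp [hij.symm, hjk, hzj]
    · simp [hik.symm]
  rw [e]
  refine eq_zero_on_line hf hw (by simp [hik]) (fun m => ?_) (hzl i)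
  refine eq_zero_on_line (iter_pder_analytic i m hf) h0 rfl (fun n => ?_) (hzl k)
  rw [← mder_single, mder_iter_pder Metric.isOpen_ball _ i m hf h0]
  by_contra hcon
  exact h _ hcon (by simp [hij.symm, hjk])

/-- A holomorphic function of two variables (here the restriction of `g` to `z_j = 0`) has no
isolated zeros: by the maximum principle for `1 / g` on the discs `z_k = const`, the values near the
origin are bounded below by those on the boundary. -/
lemma no_isolated_zero {g : (Fin 3 → ℂ) → ℂ} {r : ℝ} (hr : 0 < r)
    (hg : AnalyticOnNhd ℂ g (Metric.ball 0 r)) {i j k : Fin 3} (hij : i ≠ j) (hik : i ≠ k)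
    (hjk : j ≠ k) (hne : ∀ z ∈ Metric.ball (0 : Fin 3 → ℂ) r, z j = 0 → z ≠ 0 → g z ≠ 0) :
    g 0 ≠ 0 := by
  intro hg0
  have h0 : (0 : Fin 3 → ℂ) ∈ Metric.ball 0 r := Metric.mem_ball_self hr
  let P : ℂ → ℂ → (Fin 3 → ℂ) := fun x y => 0 + Pi.single k y + Pi.single i x
  have hPi : ∀ x y, P x y i = x := fun x y => by simp [P, hik]
  have hPk : ∀ x y, P x y k = y := fun x y => by simp [P, hik.symm]
  have hPj : ∀ x y, P x y j = 0 := fun x y => by simp [P, hij.symm, hjk]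
  have hPm : ∀ x y, ‖x‖ < r → ‖y‖ < r → P x y ∈ Metric.ball (0 : Fin 3 → ℂ) r := fun x y hx hy =>
    add_single_mem_ball (add_single_mem_ball h0 rfl hy) (by simp [hik]) hx
  have hPc : Continuous fun p : ℂ × ℂ => P p.1 p.2 := by
    have c1 : Continuous fun p : ℂ × ℂ => (Pi.single k p.2 : Fin 3 → ℂ) :=
      (continuous_single k).comp continuous_snd
    have c2 : Continuous fun p : ℂ × ℂ => (Pi.single i p.1 : Fin 3 → ℂ) :=
      (continuous_single i).comp continuous_fst
    exact (continuous_const.add c1).add c2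
  have hr2 : r / 2 < r := by linarith
  -- a lower bound on the part `|x| = r / 2` of the boundary
  have hK : IsCompact (Metric.sphere (0 : ℂ) (r / 2) ×ˢ Metric.closedBall (0 : ℂ) (r / 2)) :=
    (isCompact_sphere _ _).prod (isCompact_closedBall _ _)
  have hKmem : ∀ p ∈ Metric.sphere (0 : ℂ) (r / 2) ×ˢ Metric.closedBall (0 : ℂ) (r / 2),
      P p.1 p.2 ∈ Metric.ball (0 : Fin 3 → ℂ) r := by
    rintro ⟨x, y⟩ ⟨hx, hy⟩
    exact hPm x y (by rw [mem_sphere_zero_iff_norm.1 hx]; exact hr2)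
      ((mem_closedBall_zero_iff.1 hy).trans_lt hr2)
  have hcont : ContinuousOn (fun p : ℂ × ℂ => ‖g (P p.1 p.2)‖)
      (Metric.sphere (0 : ℂ) (r / 2) ×ˢ Metric.closedBall (0 : ℂ) (r / 2)) :=
    (hg.continuousOn.comp hPc.continuousOn hKmem).norm
  have hKne : (Metric.sphere (0 : ℂ) (r / 2) ×ˢ Metric.closedBall (0 : ℂ) (r / 2)).Nonempty :=
    ((NormedSpace.sphere_nonempty).2 (by positivity)).prod
      (Metric.nonempty_closedBall.2 (by positivity))
  obtain ⟨p, hp, hmin⟩ := hK.exists_isMinOn hKne hcont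
  have hppos : 0 < ‖g (P p.1 p.2)‖ := by
    rw [norm_pos_iff]
    refine hne _ (hKmem p hp) (hPj _ _) fun h => ?_
    have h1 := congrFun h i
    rw [hPi] at h1
    have h2 := mem_sphere_zero_iff_norm.1 hp.1
    rw [h1] at h2
    simp at h2
    linarith
  set ε := ‖g (P p.1 p.2)‖ with hε
  have hlow : ∀ y : ℂ, y ≠ 0 → ‖y‖ < r / 2 → ε ≤ ‖g (P 0 y)‖ := by
    intro y hy0 hy
    have hnz : ∀ x : ℂ, ‖x‖ < r → g (P x y) ≠ 0 := fun x hx =>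
      hne _ (hPm x y hx (by linarith)) (hPj _ _) fun h => hy0 (by rw [← hPk x y, h]; rfl)
    have hd : DifferentiableOn ℂ (fun x => (g (P x y))⁻¹) (Metric.ball 0 r) := by
      intro x hx
      rw [mem_ball_zero_iff] at hx
      exact ((hasDerivAt_line (hg _ (hPm x y hx (by linarith))).differentiableAt
        rfl).differentiableAt.inv (hnz x hx)).differentiableWithinAt
    have hdc := hd.diffContOnCl_ball (Metric.closedBall_subset_ball hr2)
    have hle := Complex.norm_le_of_forall_mem_frontier_norm_le (C := ε⁻¹) Metric.isBounded_ball hdc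
      (fun x hx => ?_) (subset_closure (Metric.mem_ball_self (half_pos hr)))
    · rw [norm_inv] at hle
      exact (inv_le_inv₀ (norm_pos_iff.2 (hnz 0 (by simpa using hr))) hppos).1 hle
    · rw [frontier_ball _ (half_pos hr).ne'] at hx
      rw [norm_inv]
      exact inv_anti₀ hppos (hmin (a := (x, y)) ⟨hx, mem_closedBall_zero_iff.2 hy.le⟩)
  have hP0 : P 0 0 = 0 := by simp [P]
  have hlim : Tendsto (fun y => ‖g (P 0 y)‖) (𝓝[≠] 0) (𝓝 0) := by
    have c : ContinuousAt (fun y => ‖g (P 0 y)‖) 0 := by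
      have hP : ContinuousAt (fun y => P 0 y) 0 := (hPc.comp (Continuous.prodMk_right 0)).continuousAt
      refine ContinuousAt.norm (ContinuousAt.comp (f := fun y => P 0 y) ?_ hP)
      exact hg.continuousOn.continuousAt (Metric.isOpen_ball.mem_nhds (by rw [hP0]; exact h0))
    have := c.tendsto
    rw [hP0, hg0, norm_zero] at this
    exact this.mono_left nhdsWithin_le_nhds
  have hev : ∀ᶠ y in 𝓝[≠] (0 : ℂ), ε ≤ ‖g (P 0 y)‖ := by
    have h1 : ∀ᶠ y in 𝓝[≠] (0 : ℂ), y ∈ Metric.ball (0 : ℂ) (r / 2) :=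
      nhdsWithin_le_nhds (Metric.ball_mem_nhds 0 (half_pos hr))
    filter_upwards [h1, self_mem_nhdsWithin] with y hy hy0
    exact hlow y hy0 (mem_ball_zero_iff.1 hy)
  exact absurd (ge_of_tendsto hlim hev) (not_le.2 hppos)

/-- The support of an isolated singularity meets every coordinate plane: otherwise `f` is divisible
by `z_j`, and the gradient vanishes wherever `z_j` and the quotient do. -/
lemma exists_mem_plane {f : (Fin 3 → ℂ) → ℂ} {r : ℝ} (hr : 0 < r)
    (hf : AnalyticOnNhd ℂ f (Metric.ball 0 r)) (hgrad : ∀ i, pder i f 0 = 0)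
    (hiso : ∀ z ∈ Metric.ball (0 : Fin 3 → ℂ) r, z ≠ 0 → ∃ i, pder i f z ≠ 0) (j : Fin 3) :
    ∃ ν ∈ NSupp f, ν j = 0 := by
  by_contra hcon
  push Not at hcon
  obtain ⟨i, k, hij, hik, hjk⟩ : ∃ i k : Fin 3, i ≠ j ∧ i ≠ k ∧ j ≠ k := by
    clear hcon
    revert j; decide
  have hzero : ∀ z ∈ Metric.ball (0 : Fin 3 → ℂ) r, z j = 0 → ∀ l, l ≠ j → pder l f z = 0 := by
    intro z hz hzj l hl
    have hd := hasDerivAt_line (hf z hz).differentiableAt (w := z) (i := l) (t := 0) (by simp)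
    refine hd.unique ?_
    have hE : (fun s : ℂ => f (z + Pi.single l s)) =ᶠ[𝓝 0] fun _ => 0 := by
      have hl' : Continuous fun s : ℂ => (Pi.single l s : Fin 3 → ℂ) :=
        continuous_single (A := fun _ => ℂ) l
      have hc : Continuous fun s : ℂ => z + Pi.single l s := continuous_const.add hl'
      have hm : ∀ᶠ s in 𝓝 (0 : ℂ), z + Pi.single l s ∈ Metric.ball (0 : Fin 3 → ℂ) r :=
        hc.continuousAt.eventually_mem (Metric.isOpen_ball.mem_nhds (by simpa using hz))
      filter_upwards [hm] with s hs
      exact eq_zero_on_plane hr hf hij hik hjk hcon hs (by simp [hzj, hl.symm])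
    exact (hasDerivAt_const (0 : ℂ) (0 : ℂ)).congr_of_eventuallyEq hE
  refine no_isolated_zero hr (pder_analytic j hf) hij hik hjk (fun z hz hzj hz0 h => ?_) (hgrad j)
  obtain ⟨l, hl⟩ := hiso z hz hz0
  rcases eq_or_ne l j with rfl | hlj
  · exact hl h
  · exact hl (hzero z hz hzj l hlj)

lemma two_le_of_mem_nSupp {f : (Fin 3 → ℂ) → ℂ} (hf : IsSing f) {a b c : ℕ}
    (h : supp3 f a b c) : 2 ≤ a + b + c := by
  by_contra hcon
  have hs : (a = 0 ∧ b = 0 ∧ c = 0) ∨ (a = 1 ∧ b = 0 ∧ c = 0) ∨ (a = 0 ∧ b = 1 ∧ c = 0) ∨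
      (a = 0 ∧ b = 0 ∧ c = 1) := by omega
  obtain ⟨-, -, h0, h1⟩ := hf
  rcases hs with ⟨rfl, rfl, rfl⟩ | ⟨rfl, rfl, rfl⟩ | ⟨rfl, rfl, rfl⟩ | ⟨rfl, rfl, rfl⟩
  exacts [h h0, h (h1 0), h (h1 1), h (h1 2)]

/-- The analytic hypotheses in combinatorial form. -/
lemma nSupp_of_isolated {f : (Fin 3 → ℂ) → ℂ} (hf : IsIsolSing f) :
    (∀ i, ∃ n k, Pi.single i n + Pi.single k 1 ∈ NSupp f) ∧ ∀ j, ∃ ν ∈ NSupp f, ν j = 0 := by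
  obtain ⟨⟨han, -, -, hgrad⟩, r1, hr1, hiso⟩ := hf
  obtain ⟨r2, hr2, hball⟩ := Metric.eventually_nhds_iff_ball.1 han.eventually_analyticAt
  have hr : 0 < min r1 r2 := lt_min hr1 hr2
  have hf' : AnalyticOnNhd ℂ f (Metric.ball 0 (min r1 r2)) := fun z hz =>
    hball z (Metric.ball_subset_ball (min_le_right _ _) hz)
  have hiso' : ∀ z ∈ Metric.ball (0 : Fin 3 → ℂ) (min r1 r2), z ≠ 0 → ∃ i, pder i f z ≠ 0 :=
    fun z hz => hiso z ((mem_ball_zero_iff.1 hz).trans_le (min_le_left _ _))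
  exact ⟨exists_near_axis hr hf' hiso', exists_mem_plane hr hf' hgrad hiso'⟩

lemma good_of_isolated {f : (Fin 3 → ℂ) → ℂ} (hf : IsIsolSing f)
    (h : GammaK f 2 = ∅ ∨ (GammaK f 2 = Ef f ∧ (GammaK f 2).Nonempty)) : Good (supp3 f) := by
  obtain ⟨hax, hpl⟩ := nSupp_of_isolated hf
  have hne : (NSupp f).Nonempty := by
    obtain ⟨ν, hν, -⟩ := hpl 0
    exact ⟨ν, hν⟩
  have hV : ∀ ν ∈ NSupp f, supp3 f (ν 0) (ν 1) (ν 2) := fun ν hν => by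
    unfold supp3; rwa [vec3_eta]
  refine ⟨fun a b c hv => two_le_of_mem_nSupp hf.1 hv, ?_, ?_, ?_, ?_, ?_, ?_, ?_⟩
  · obtain ⟨n, k, hm⟩ := hax 0
    refine ⟨_, _, _, hV _ hm, ?_⟩
    fin_cases k <;> simp
  · obtain ⟨n, k, hm⟩ := hax 1
    refine ⟨_, _, _, hV _ hm, ?_⟩
    fin_cases k <;> simp
  · obtain ⟨n, k, hm⟩ := hax 2
    refine ⟨_, _, _, hV _ hm, ?_⟩
    fin_cases k <;> simp
  · obtain ⟨ν, hν, h0⟩ := hpl 0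
    exact ⟨ν 1, ν 2, h0 ▸ hV ν hν⟩
  · obtain ⟨ν, hν, h0⟩ := hpl 1
    exact ⟨ν 0, ν 2, h0 ▸ hV ν hν⟩
  · obtain ⟨ν, hν, h0⟩ := hpl 2
    exact ⟨ν 0, ν 1, h0 ▸ hV ν hν⟩
  · intro x y z hx hy hz a b c a' b' c' a'' b'' c'' hA hB hC hd
    exact exc_of_gamma hne h hx hy hz hA hB hC hd

/-- for an isolated singularity `f ∈ 𝒪₃`,
`Γ²(f) = ∅ ∨ Γ²(f) = E_f ≠ ∅` holds iff `Γ¹(f) ∩ 𝒥 ≠ ∅`. -/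
theorem stmt15 (f : (Fin 3 → ℂ) → ℂ) (hf : IsIsolSing f) :
    (GammaK f 2 = ∅ ∨ (GammaK f 2 = Ef f ∧ (GammaK f 2).Nonempty)) ↔
      ∃ I ∈ GammaK f 1, InJ I := by
  have hne : (NSupp f).Nonempty := by
    obtain ⟨ν, hν, -⟩ := (nSupp_of_isolated hf).2 0
    exact ⟨ν, hν⟩
  exact ⟨fun h => exists_segJ_of_concl hne (good_of_isolated hf h).concl,
    gamma_of_exists_segJ hne⟩
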